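/- arXiv:2003.01830 — 4 statements merged into one kernel-verified Lean document; each statement's English description precedes it below -/
import Mathlib

section
/- Let f = Σ_{i=0}^d a_i x^i ∈ K[x] with a_d ≠ 0, and let i_0 < i_1 < … < i_s be the indices such that (i_0, v(a_{i_0})), …, (i_s, v(a_{i_s})) are the vertices of NP(f); for j = 1,…,s let ρ_j ∈ ℚ be the slope of the edge joining (i_{j−1}, v(a_{i_{j−1}})) and (i_j, v(a_{i_j})). Then f factors over K as f = c·x^{i_0}·g_1⋯g_s, where c ∈ K^×, each g_j ∈ K[x] is monic of degree i_j − i_{j−1}, and every root of g_j in K̄ has valuation −ρ_j. -/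
open Polynomial
open scoped Classical

namespace ClusterPicture

variable {K Kbar : Type*} [Field K] [Field Kbar] [Algebra K Kbar]

lemma zero_lt_top' : (0 : WithTop ℚ) < ⊤ := by
  simp

lemma withTop_add_pos {a b : WithTop ℚ} (ha : 0 ≤ a) (hb : 0 < b) : 0 < a + b := by
  rcases eq_or_ne a ⊤ with h | h
  · subst h; rw [top_add]; exact zero_lt_top'
  · lift a to ℚ using h
    rcases eq_or_ne b ⊤ with h' | h'
    · subst h'; rw [add_top]; exact zero_lt_top'
    · lift b to ℚ using h'
      have ha' : (0 : ℚ) ≤ a := by exact_mod_cast ha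
      have hb' : (0 : ℚ) < b := by exact_mod_cast hb
      exact_mod_cast add_pos_of_nonneg_of_pos ha' hb'

/-- The setting of the paper: `K` is a complete discretely valued field, with valuation `v`
normalised so that `v(K^×) = ℤ`, `Kbar` is an algebraic closure of `K`, and `v` is (the unique)
extension of the valuation to a `ℚ ∪ {∞}`-valued valuation on `Kbar`. -/
structure Setup (K Kbar : Type*) [Field K] [Field Kbar] [Algebra K Kbar] : Type _ where
  /-- the valuation on the algebraic closure -/
  v : Kbar → WithTop ℚ
  v_top_iff : ∀ x : Kbar, v x = ⊤ ↔ x = 0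
  v_one : v 1 = 0
  v_neg : ∀ x : Kbar, v (-x) = v x
  v_mul : ∀ x y : Kbar, v (x * y) = v x + v y
  v_add : ∀ x y : Kbar, min (v x) (v y) ≤ v (x + y)
  /-- the valuation is normalised: nonzero elements of `K` have integer valuation -/
  v_base_int : ∀ x : K, x ≠ 0 → ∃ n : ℤ, v (algebraMap K Kbar x) = ((n : ℚ) : WithTop ℚ)
  /-- the valuation is surjective onto `ℤ` on `K^×`: there is a uniformiser -/
  exists_uniformiser : ∃ π : K, v (algebraMap K Kbar π) = ((1 : ℚ) : WithTop ℚ)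
  /-- `Kbar` is an algebraic closure of `K` -/
  algClosed : IsAlgClosed Kbar
  algebraic : Algebra.IsAlgebraic K Kbar
  /-- `K` is complete with respect to the valuation -/
  complete : ∀ a : ℕ → K,
    (∀ q : ℚ, ∃ N : ℕ, ∀ m, N ≤ m → ∀ n, N ≤ n →
      ((q : ℚ) : WithTop ℚ) ≤ v (algebraMap K Kbar (a m - a n))) →
    ∃ b : K, ∀ q : ℚ, ∃ N : ℕ, ∀ n, N ≤ n →
      ((q : ℚ) : WithTop ℚ) ≤ v (algebraMap K Kbar (a n - b))

/-- Valuation of an element of the base field `K`. -/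
def Setup.vK (S : Setup K Kbar) (x : K) : WithTop ℚ := S.v (algebraMap K Kbar x)

/-- The finite set of roots of `f` in the algebraic closure `Kbar`. -/
noncomputable def rootFinset (f : K[X]) : Finset Kbar :=
  (f.map (algebraMap K Kbar)).roots.toFinset

/-- A cluster for `f`: a nonempty subset of the set of roots of `f` cut out by a `v`-adic disc. -/
def IsCluster (S : Setup K Kbar) (f : K[X]) (s : Finset Kbar) : Prop :=
  s.Nonempty ∧ ∃ (z : Kbar) (δ : ℚ),
    s = (rootFinset f).filter fun r => ((δ : ℚ) : WithTop ℚ) ≤ S.v (r - z)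

/-- The depth `d_s = min_{r,r' ∈ s} v (r - r')` of a cluster. -/
noncomputable def depth (S : Setup K Kbar) (s : Finset Kbar) : WithTop ℚ :=
  s.inf fun r => s.inf fun r' => S.v (r - r')

/-- `min_{r ∈ s} v (r - z)`, for `z ∈ Kbar`. -/
noncomputable def dmin (S : Setup K Kbar) (s : Finset Kbar) (z : Kbar) : WithTop ℚ :=
  s.inf fun r => S.v (r - z)

/-- `min_{r ∈ s} v (r - w)`, for `w ∈ K`. -/
noncomputable def dminK (S : Setup K Kbar) (s : Finset Kbar) (w : K) : WithTop ℚ :=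
  dmin S s (algebraMap K Kbar w)

/-- `w ∈ K` is a rational centre of `s` if it maximises `min_{r ∈ s} v (r - w)`.
For a proper cluster `s` with rational centre `w`, the radius `ρ_s` is `dminK S s w`. -/
def IsRationalCentre (S : Setup K Kbar) (s : Finset Kbar) (w : K) : Prop :=
  ∀ w' : K, dminK S s w' ≤ dminK S s w

/-- A rational cluster: a cluster cut out by a disc with centre in `K`. -/
def IsRationalCluster (S : Setup K Kbar) (f : K[X]) (s : Finset Kbar) : Prop :=
  s.Nonempty ∧ ∃ (w : K) (δ : ℚ),
    s = (rootFinset f).filter fun r => ((δ : ℚ) : WithTop ℚ) ≤ S.v (r - algebraMap K Kbar w)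

/-- A cluster centred at `w ∈ K`. -/
def IsClusterCentredAt (S : Setup K Kbar) (f : K[X]) (w : K) (s : Finset Kbar) : Prop :=
  s.Nonempty ∧ ∃ δ : ℚ,
    s = (rootFinset f).filter fun r => ((δ : ℚ) : WithTop ℚ) ≤ S.v (r - algebraMap K Kbar w)

/-- The cluster picture of `f` is almost rational: every proper cluster `s` with
`|s| > |ρ_s|_p` satisfies `d_s = ρ_s`. -/
def AlmostRational (S : Setup K Kbar) (f : K[X]) (p : ℕ) : Prop :=
  ∀ s : Finset Kbar, IsCluster S f s → 1 < s.card →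
    ∀ (w : K) (ρ : ℚ), IsRationalCentre S s w → dminK S s w = ((ρ : ℚ) : WithTop ℚ) →
      padicNorm p ρ < (s.card : ℚ) → depth S s = ((ρ : ℚ) : WithTop ℚ)

/-- The slope of the `j`-th edge of the polygon with vertices `(i_j, c_j)`. -/
def NPslope {s : ℕ} (i : Fin (s + 1) → ℕ) (c : Fin (s + 1) → ℚ) (j : Fin s) : ℚ :=
  (c j.succ - c j.castSucc) / ((i j.succ : ℚ) - (i j.castSucc : ℚ))

/-- `(i_0, c_0), …, (i_s, c_s)` are the vertices of the Newton polygon of `f`: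
the points `(i_j, c_j)` are among the points `(m, v(a_m))`, the first and last vertices lie
above the trailing and leading coefficients, the slopes of consecutive edges strictly
increase, and every point `(m, v(a_m))` lies on or above (the line spanned by) every edge. -/
structure IsNPVertices (S : Setup K Kbar) (f : K[X]) (s : ℕ)
    (i : Fin (s + 1) → ℕ) (c : Fin (s + 1) → ℚ) : Prop where
  mono : StrictMono i
  first : i 0 = f.natTrailingDegree
  last : i (Fin.last s) = f.natDegree
  vert : ∀ j, S.vK (f.coeff (i j)) = ((c j : ℚ) : WithTop ℚ)
  slope_mono : StrictMono (NPslope i c)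
  support : ∀ (j : Fin s) (m : ℕ) (q : ℚ), S.vK (f.coeff m) = ((q : ℚ) : WithTop ℚ) →
    (c j.succ - c j.castSucc) * ((m : ℚ) - (i j.castSucc : ℚ)) ≤
      (q - c j.castSucc) * ((i j.succ : ℚ) - (i j.castSucc : ℚ))

/-- The valuation ring of `Kbar`. -/
def intRing (S : Setup K Kbar) : Subring Kbar where
  carrier := {x : Kbar | (0 : WithTop ℚ) ≤ S.v x}
  zero_mem' := by
    simp only [Set.mem_setOf_eq, (S.v_top_iff 0).mpr rfl]
    exact le_top
  one_mem' := by
    simp only [Set.mem_setOf_eq, S.v_one]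
    exact le_refl _
  add_mem' := by
    intro a b ha hb
    exact le_trans (le_min ha hb) (S.v_add a b)
  mul_mem' := by
    intro a b ha hb
    simp only [Set.mem_setOf_eq, S.v_mul a b]
    exact add_nonneg ha hb
  neg_mem' := by
    intro a ha
    simpa only [Set.mem_setOf_eq, S.v_neg] using ha

lemma mem_intRing {S : Setup K Kbar} {x : Kbar} :
    x ∈ intRing S ↔ (0 : WithTop ℚ) ≤ S.v x := Iff.rfl

/-- The maximal ideal of the valuation ring of `Kbar`. -/
def maxIdeal (S : Setup K Kbar) : Ideal (intRing S) where
  carrier := {x : intRing S | (0 : WithTop ℚ) < S.v (x : Kbar)}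
  zero_mem' := by
    show (0 : WithTop ℚ) < S.v ((0 : intRing S) : Kbar)
    rw [show ((0 : intRing S) : Kbar) = 0 from rfl, (S.v_top_iff 0).mpr rfl]
    exact zero_lt_top'
  add_mem' := by
    intro a b ha hb
    show (0 : WithTop ℚ) < S.v ((a : Kbar) + (b : Kbar))
    exact lt_of_lt_of_le (lt_min ha hb) (S.v_add _ _)
  smul_mem' := by
    intro c x hx
    show (0 : WithTop ℚ) < S.v ((c : Kbar) * (x : Kbar))
    rw [S.v_mul]
    exact withTop_add_pos c.2 hx

/-- The residue field of `Kbar`; it is an algebraic closure of the residue field `k` of `K`. -/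
abbrev Residue (S : Setup K Kbar) : Type _ := intRing S ⧸ maxIdeal S

/-- Reduction to the residue field (with junk value `0` on non-integral elements). -/
noncomputable def red (S : Setup K Kbar) (x : Kbar) : Residue S :=
  if h : (0 : WithTop ℚ) ≤ S.v x then Ideal.Quotient.mk (maxIdeal S) ⟨x, mem_intRing.mpr h⟩
  else 0

/-- The reduction `f̄|_L` of `f` along the edge `L` of its Newton polygon with endpoints
`(i₁, q₁)` and `(i₂, q₂)`, of slope `ρ = nρ / n` where `n` is the denominator of `ρ`;
`π` is a uniformiser of `K`.  This is the reduction of `π^{-q₁}·(f|_L)(π^{-nρ}·x)`, where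
`f|_L (x) = ∑_j a_{n j + i₁} x^j`. -/
noncomputable def redEdge (S : Setup K Kbar) (π : K) (f : K[X])
    (i₁ i₂ : ℕ) (q₁ nρ : ℤ) (n : ℕ) : Polynomial (Residue S) :=
  ∑ j ∈ Finset.range ((i₂ - i₁) / n + 1),
    Polynomial.C (red S (algebraMap K Kbar (f.coeff (n * j + i₁)) *
      (algebraMap K Kbar π) ^ (-(q₁ + (j : ℤ) * nρ)))) * Polynomial.X ^ j

/-- `f` is NP-regular (`Δ_v`-regular in dimension 1): for every edge `L` of its Newton
polygon, the reduction `f̄|_L` has no multiple roots in the algebraic closure of the residue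
field, i.e. is separable. -/
def NPRegular (S : Setup K Kbar) (π : K) (f : K[X]) : Prop :=
  ∀ (s : ℕ) (i : Fin (s + 1) → ℕ) (c : Fin (s + 1) → ℚ),
    IsNPVertices S f s i c →
    ∀ (j : Fin s) (q₁ nρ : ℤ) (n : ℕ),
      (q₁ : ℚ) = c j.castSucc →
      n = (NPslope i c j).den →
      (nρ : ℚ) = (n : ℚ) * NPslope i c j →
      (redEdge S π f (i j.castSucc) (i j.succ) q₁ nρ n).Separable

/-- The vertex-index function of the Newton polygon of `f(x+w)`, in terms of the sizes of
the clusters `s_1 ⊂ … ⊂ s_{n+1}` centred at `w`; here `t` is the prescribed first index. -/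
def vertIdx {n : ℕ} (t : ℕ) (s : Fin (n + 1) → Finset Kbar) : Fin (n + 2) → ℕ :=
  fun j => Fin.cases (motive := fun _ => ℕ) t (fun j' => (s j').card) j

/-- The vertex-value function of the Newton polygon of `f(x+w)`: the vertex over `|s_j|` has
second coordinate `ε_{s_j} - |s_j|·ρ_{s_j}`; `c0` is the prescribed value at the first vertex. -/
def vertVal {n : ℕ} (c0 : ℚ) (s : Fin (n + 1) → Finset Kbar) (ρ ε : Fin (n + 1) → ℚ) :
    Fin (n + 2) → ℚ :=
  fun j => Fin.cases (motive := fun _ => ℚ) c0 (fun j' => ε j' - ((s j').card : ℚ) * ρ j') j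

/-!
The faces of given slope of the Newton polygons of `P` and `Q` add up in the polygon of `P * Q`,
and the only edge in the polygon of `X - r` has length one and slope `-v r`; so the length of an
edge in the polygon of `f` is the number of roots of the corresponding valuation. Conjugate roots
have the same valuation, because the valuation of a complete field extends uniquely; so the roots
of a given valuation are those of a product of irreducible factors of `f` over `K`, and this product
is the factor attached to the edge.
-/

open scoped NNReal

section NewtonFace

variable {R Γ₀ : Type*} [Ring R] [LinearOrderedCommGroupWithZero Γ₀]

/-- The value that the `m`-th term of `P` takes at points of value `t`. -/
def termValue (v : Valuation R Γ₀) (t : Γ₀) (P : R[X]) (m : ℕ) : Γ₀ :=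
  v (P.coeff m) * t ^ m

/-- The face of the Newton polygon of `P` cut out by the supporting line of slope `log t`
(an edge if `a < b`, a vertex if `a = b`), in multiplicative form: `a` and `b` are the first and
the last index at which the terms of `P` attain their largest value on the sphere of radius `t`. -/
structure IsNewtonFace (v : Valuation R Γ₀) (t : Γ₀) (P : R[X]) (a b : ℕ) : Prop where
  le : ∀ m, termValue v t P m ≤ termValue v t P a
  eq : termValue v t P b = termValue v t P a
  lt_of_lt : ∀ m < a, termValue v t P m < termValue v t P a
  lt_of_gt : ∀ m > b, termValue v t P m < termValue v t P a

variable {v : Valuation R Γ₀} {t : Γ₀} {P Q : R[X]} {a b a' b' : ℕ}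

lemma termValue_mul_termValue (i j : ℕ) :
    termValue v t P i * termValue v t Q j = v (P.coeff i * Q.coeff j) * t ^ (i + j) := by
  rw [termValue, termValue, map_mul, pow_add, mul_mul_mul_comm]

lemma exists_termValue_mul_le (v : Valuation R Γ₀) (t : Γ₀) (P Q : R[X]) (n : ℕ) :
    ∃ i j, i + j = n ∧ termValue v t (P * Q) n ≤ termValue v t P i * termValue v t Q j := by
  obtain ⟨⟨i, j⟩, hij, hmax⟩ := (Finset.HasAntidiagonal.antidiagonal n).exists_max_image
    (fun x => v (P.coeff x.1 * Q.coeff x.2)) ⟨(0, n), by simp⟩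
  obtain rfl := Finset.HasAntidiagonal.mem_antidiagonal.1 hij
  refine ⟨i, j, rfl, ?_⟩
  rw [termValue_mul_termValue, termValue, coeff_mul]
  gcongr
  exact v.map_sum_le hmax

lemma termValue_mul_eq (h : ∀ i j, i + j = a + b → i ≠ a →
      termValue v t P i * termValue v t Q j < termValue v t P a * termValue v t Q b) :
    termValue v t (P * Q) (a + b) = termValue v t P a * termValue v t Q b := by
  rw [termValue_mul_termValue, termValue, coeff_mul,
    v.map_sum_eq_of_lt (f := fun x => P.coeff x.1 * Q.coeff x.2) (j := (a, b)) (by simp)]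
  rintro ⟨i, j⟩ hij
  simp only [Finset.mem_sdiff, Finset.HasAntidiagonal.mem_antidiagonal, Finset.mem_singleton,
    Prod.mk.injEq] at hij
  have hlt := h i j hij.1 (by omega)
  rw [termValue_mul_termValue, termValue_mul_termValue, hij.1] at hlt
  exact lt_of_mul_lt_mul_right' hlt

namespace IsNewtonFace

lemma pos (h : IsNewtonFace v t P a b) : 0 < termValue v t P a :=
  zero_le.trans_lt (h.lt_of_gt (b + 1) b.lt_succ_self)

lemma ne_zero (h : IsNewtonFace v t P a b) : P ≠ 0 := by
  rintro rfl
  simpa [termValue] using h.pos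

lemma termValue_eq (h : IsNewtonFace v t P a b) (h' : IsNewtonFace v t P a' b') :
    termValue v t P a = termValue v t P a' :=
  le_antisymm (h'.le a) (h.le a')

lemma left_le (h : IsNewtonFace v t P a b) (h' : IsNewtonFace v t P a' b') : a ≤ a' :=
  not_lt.1 fun hlt => (h.lt_of_lt a' hlt).ne (h.termValue_eq h').symm

lemma right_le (h : IsNewtonFace v t P a b) (h' : IsNewtonFace v t P a' b') : b ≤ b' :=
  not_lt.1 fun hlt => (h'.lt_of_gt b hlt).ne (h.eq.trans (h.termValue_eq h'))

protected lemma unique (h : IsNewtonFace v t P a b) (h' : IsNewtonFace v t P a' b') :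
    a = a' ∧ b = b' :=
  ⟨(h.left_le h').antisymm (h'.left_le h), (h.right_le h').antisymm (h'.right_le h)⟩

lemma termValue_mul_lt_mul (hP : IsNewtonFace v t P a b) (hQ : IsNewtonFace v t Q a' b') {i j : ℕ}
    (h : termValue v t P i < termValue v t P a ∨ termValue v t Q j < termValue v t Q a') :
    termValue v t P i * termValue v t Q j < termValue v t P a * termValue v t Q a' := by
  rcases h with h | h
  · exact mul_lt_mul_of_lt_of_le_of_nonneg_of_pos h (hQ.le j) zero_le hQ.pos
  · exact mul_lt_mul_of_le_of_lt_of_nonneg_of_pos (hP.le i) h zero_le hP.pos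

protected lemma mul (hP : IsNewtonFace v t P a b) (hQ : IsNewtonFace v t Q a' b') :
    IsNewtonFace v t (P * Q) (a + a') (b + b') := by
  have left_strict {i j : ℕ} (h : i < a ∨ j < a') :
      termValue v t P i * termValue v t Q j < termValue v t P a * termValue v t Q a' :=
    hP.termValue_mul_lt_mul hQ (h.imp (hP.lt_of_lt i) (hQ.lt_of_lt j))
  have right_strict {i j : ℕ} (h : b < i ∨ b' < j) :
      termValue v t P i * termValue v t Q j < termValue v t P a * termValue v t Q a' :=
    hP.termValue_mul_lt_mul hQ (h.imp (hP.lt_of_gt i) (hQ.lt_of_gt j))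
  have left_eq : termValue v t (P * Q) (a + a') = termValue v t P a * termValue v t Q a' :=
    termValue_mul_eq fun i j hij hi => left_strict (by omega)
  have right_eq : termValue v t (P * Q) (b + b') = termValue v t P b * termValue v t Q b' :=
    termValue_mul_eq fun i j hij hi => by
      rw [hP.eq, hQ.eq]
      exact right_strict (by omega)
  refine ⟨fun m => ?_, by rw [left_eq, right_eq, hP.eq, hQ.eq], fun m hm => ?_, fun m hm => ?_⟩
  all_goals
    rw [left_eq]
    obtain ⟨i, j, rfl, hle⟩ := exists_termValue_mul_le v t P Q m
  · exact hle.trans (mul_le_mul' (hP.le i) (hQ.le j))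
  · exact hle.trans_lt (left_strict (by omega))
  · exact hle.trans_lt (right_strict (by omega))

end IsNewtonFace

lemma isNewtonFace_C {u : R} (hu : v u ≠ 0) : IsNewtonFace v t (C u) 0 0 := by
  have lt_zero (m : ℕ) (hm : 0 < m) : termValue v t (C u) m < termValue v t (C u) 0 := by
    simpa [termValue, coeff_C, hm.ne'] using zero_lt_iff.2 hu
  refine ⟨fun m => ?_, rfl, fun m hm => absurd hm m.not_lt_zero, lt_zero⟩
  rcases m.eq_zero_or_pos with rfl | hm
  · exact le_rfl
  · exact (lt_zero m hm).le

lemma isNewtonFace_X_sub_C (ht : t ≠ 0) (r : R) :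
    IsNewtonFace v t (X - C r) (if v r < t then 1 else 0) (if v r ≤ t then 1 else 0) := by
  have h_zero : termValue v t (X - C r) 0 = v r := by simp [termValue]
  have h_one : termValue v t (X - C r) 1 = t := by simp [termValue]
  have h_large (m : ℕ) : termValue v t (X - C r) (m + 2) = 0 := by
    simp [termValue, coeff_X]
  have ht_pos : 0 < t := zero_lt_iff.2 ht
  rcases lt_trichotomy (v r) t with h | h | h
  · rw [if_pos h, if_pos h.le]
    refine ⟨?_, rfl, ?_, ?_⟩ <;> rintro (_ | _ | m)
    all_goals simp [h_zero, h_one, h_large, h, h.le, ht_pos]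
  · rw [if_neg h.not_lt, if_pos h.le]
    refine ⟨?_, h_one.trans (h_zero.trans h).symm, ?_, ?_⟩ <;> rintro (_ | _ | m)
    all_goals simp [h_zero, h_one, h_large, h, ht_pos]
  · rw [if_neg h.not_gt, if_neg h.not_ge]
    refine ⟨?_, rfl, ?_, ?_⟩ <;> rintro (_ | _ | m)
    all_goals simp [h_zero, h_one, h_large, h, h.le, ht_pos.trans h]

end NewtonFace

section CountRoots

lemma countP_le_eq_countP_lt_add_countP_eq {α β : Type*} [LinearOrder β] (φ : α → β) (t : β)
    (M : Multiset α) :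
    M.countP (φ · ≤ t) = M.countP (φ · < t) + M.countP (φ · = t) := by
  rw [M.countP_eq_countP_filter_add _ (φ · < t), Multiset.countP_filter, Multiset.countP_filter]
  congr 2 <;> grind

variable {L Γ₀ : Type*} [Field L] [LinearOrderedCommGroupWithZero Γ₀] {v : Valuation L Γ₀} {t : Γ₀}

lemma isNewtonFace_C_mul_prod_X_sub_C (ht : t ≠ 0) {u : L} (hu : u ≠ 0) (M : Multiset L) :
    IsNewtonFace v t (C u * (M.map fun r => X - C r).prod)
      (M.countP (v · < t)) (M.countP (v · ≤ t)) := by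
  induction M using Multiset.induction_on with
  | empty => simpa using isNewtonFace_C (v.ne_zero_iff.2 hu)
  | cons r M ih =>
    rw [Multiset.map_cons, Multiset.prod_cons, mul_left_comm, mul_comm, Multiset.countP_cons,
      Multiset.countP_cons]
    exact ih.mul (isNewtonFace_X_sub_C ht r)

lemma IsNewtonFace.countP_roots {P : L[X]} {a b : ℕ} (h : IsNewtonFace v t P a b) (ht : t ≠ 0)
    (hP : P.Splits) : P.roots.countP (v · = t) = b - a := by
  have face_roots := isNewtonFace_C_mul_prod_X_sub_C (v := v) ht
    (leadingCoeff_ne_zero.2 h.ne_zero) P.roots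
  rw [← hP.eq_prod_roots] at face_roots
  obtain ⟨ha, hb⟩ := h.unique face_roots
  rw [ha, hb, countP_le_eq_countP_lt_add_countP_eq, Nat.add_sub_cancel_left]

end CountRoots

section ConjugationInvariant

variable {K L α : Type*} [Field K] [Field L] [Algebra K L]

lemma isConjRoot_of_irreducible {p : K[X]} (hp : Irreducible p) {x y : L}
    (hx : aeval x p = 0) (hy : aeval y p = 0) : IsConjRoot K x y := by
  rw [isConjRoot_def, ← minpoly.eq_of_irreducible hp hx, ← minpoly.eq_of_irreducible hp hy]

lemma exists_monic_dvd_roots_eq_filter [DecidableEq α] {φ : L → α}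
    (hφ : ∀ x y, IsConjRoot K x y → φ x = φ y) {f : K[X]} (hf : f ≠ 0) (a : α) :
    ∃ g : K[X], g.Monic ∧ g ∣ f ∧
      (g.map (algebraMap K L)).roots = (f.map (algebraMap K L)).roots.filter (φ · = a) := by
  induction f using WfDvdMonoid.induction_on_irreducible with
  | zero => exact absurd rfl hf
  | unit u hu =>
    refine ⟨1, monic_one, one_dvd u, ?_⟩
    obtain ⟨c, -, rfl⟩ := isUnit_iff.1 hu
    simp
  | mul f p hf₀ hp ih =>
    obtain ⟨g, g_monic, g_dvd, g_roots⟩ := ih hf₀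
    have roots_split : ((p * f).map (algebraMap K L)).roots =
        (p.map (algebraMap K L)).roots + (f.map (algebraMap K L)).roots := by
      rw [Polynomial.map_mul, roots_mul]
      simpa using ⟨hp.ne_zero, hf₀⟩
    by_cases h : ∀ x ∈ (p.map (algebraMap K L)).roots, φ x = a
    · refine ⟨normalize p * g, (monic_normalize hp.ne_zero).mul g_monic,
        mul_dvd_mul (normalize_dvd_iff.2 dvd_rfl) g_dvd, ?_⟩
      rw [roots_split, Multiset.filter_add, Multiset.filter_eq_self.2 h, ← g_roots,
        Polynomial.map_mul, roots_mul, map_normalize, roots_normalize]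
      simpa using ⟨hp.ne_zero, g_monic.ne_zero⟩
    · push Not at h
      obtain ⟨x, hx, hxa⟩ := h
      have no_root (y) (hy : y ∈ (p.map (algebraMap K L)).roots) : φ y ≠ a := by
        rw [mem_roots_map hp.ne_zero] at hx hy
        rwa [hφ y x (isConjRoot_of_irreducible hp hy hx)]
      refine ⟨g, g_monic, g_dvd.mul_left p, ?_⟩
      rw [roots_split, Multiset.filter_add, Multiset.filter_eq_nil.2 no_root, zero_add, g_roots]

lemma isCoprime_of_forall_root_eq [IsAlgClosed L] {φ : L → α} {a b : α} (hab : a ≠ b) {p q : K[X]}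
    (hp : ∀ r : L, (p.map (algebraMap K L)).IsRoot r → φ r = a)
    (hq : ∀ r : L, (q.map (algebraMap K L)).IsRoot r → φ r = b) : IsCoprime p q := by
  rw [isCoprime_iff_aeval_ne_zero_of_isAlgClosed (k := K) (K := L)]
  intro r
  by_contra! h
  exact hab ((hp r (by simpa [IsRoot, eval_map_algebraMap] using h.1)).symm.trans
    (hq r (by simpa [IsRoot, eval_map_algebraMap] using h.2)))

end ConjugationInvariant

lemma eq_C_leadingCoeff_mul_prod {A ι : Type*} [CommRing A] [Fintype ι] {f : A[X]} {g : ι → A[X]}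
    (g_monic : ∀ j, (g j).Monic) (g_dvd : ∀ j, g j ∣ f)
    (g_coprime : Pairwise (Function.onFun IsCoprime g))
    (h_degree : f.natDegree ≤ ∑ j, (g j).natDegree) :
    f = C f.leadingCoeff * ∏ j, g j := by
  refine eq_leadingCoeff_mul_of_monic_of_dvd_of_natDegree_le
    (monic_prod_of_monic _ _ fun j _ => g_monic j)
    (Finset.prod_dvd_of_coprime (g_coprime.set_pairwise _) fun j _ => g_dvd j) ?_
  rwa [natDegree_prod_of_monic _ _ fun j _ => g_monic j]

lemma add_sum_succ_sub_castSucc {s : ℕ} {i : Fin (s + 1) → ℕ} (hi : Monotone i) :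
    i 0 + ∑ j : Fin s, (i j.succ - i j.castSucc) = i (Fin.last s) := by
  induction s with
  | zero => simp
  | succ s ih =>
    rw [Fin.sum_univ_castSucc, ← add_assoc]
    have telescope := ih (hi.comp Fin.strictMono_castSucc.monotone)
    simp only [Function.comp_apply, Fin.castSucc_zero, ← Fin.succ_castSucc] at telescope ⊢
    rw [telescope]
    exact Nat.add_sub_cancel' (hi Fin.castSucc_lt_succ.le)

section Factorisation

/-- `i` lists the horizontal coordinates of the vertices of the Newton polygon of `P`, and `t` the
radii `exp slope` of its edges; this is the notion `IsNPVertices` for an arbitrary valuation,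
of any rank and in multiplicative notation. -/
structure IsNewtonPolygon {R Γ₀ : Type*} [Ring R] [LinearOrderedCommGroupWithZero Γ₀]
    (v : Valuation R Γ₀) (P : R[X]) {s : ℕ} (i : Fin (s + 1) → ℕ) (t : Fin s → Γ₀) : Prop where
  strictMono : StrictMono i
  first : i 0 = P.natTrailingDegree
  last : i (Fin.last s) = P.natDegree
  radius_ne_zero : ∀ j, t j ≠ 0
  face : ∀ j, IsNewtonFace v (t j) P (i j.castSucc) (i j.succ)

lemma IsNewtonPolygon.radius_injective {R Γ₀ : Type*} [Ring R]
    [LinearOrderedCommGroupWithZero Γ₀] {v : Valuation R Γ₀} {P : R[X]} {s : ℕ}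
    {i : Fin (s + 1) → ℕ} {t : Fin s → Γ₀} (h : IsNewtonPolygon v P i t) :
    Function.Injective t := by
  intro j k hjk
  have same_start := (h.face j).unique (hjk ▸ h.face k) |>.1
  exact Fin.castSucc_injective s (h.strictMono.injective same_start)

protected lemma IsNewtonFace.map {R S Γ₀ : Type*} [Ring R] [Ring S]
    [LinearOrderedCommGroupWithZero Γ₀] {φ : R →+* S} {v : Valuation S Γ₀} {t : Γ₀}
    {P : R[X]} {a b : ℕ} (h : IsNewtonFace (v.comap φ) t P a b) :
    IsNewtonFace v t (P.map φ) a b := by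
  have termValue_map (m : ℕ) : termValue v t (P.map φ) m = termValue (v.comap φ) t P m := by
    rw [termValue, termValue, coeff_map, Valuation.comap_apply]
  constructor <;> simp only [termValue_map]
  exacts [h.le, h.eq, h.lt_of_lt, h.lt_of_gt]

variable {K L Γ₀ : Type*} [Field K] [Field L] [Algebra K L] [IsAlgClosed L]
  [LinearOrderedCommGroupWithZero Γ₀] {v : Valuation L Γ₀}

lemma IsNewtonFace.exists_monic_dvd (hv : ∀ x y, IsConjRoot K x y → v x = v y) {f : K[X]}
    {t : Γ₀} (ht : t ≠ 0) {a b : ℕ} (h : IsNewtonFace (v.comap (algebraMap K L)) t f a b) :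
    ∃ g : K[X], g.Monic ∧ g ∣ f ∧ g.natDegree = b - a ∧
      ∀ r : L, (g.map (algebraMap K L)).IsRoot r → v r = t := by
  obtain ⟨g, g_monic, g_dvd, g_roots⟩ := exists_monic_dvd_roots_eq_filter hv h.ne_zero t
  refine ⟨g, g_monic, g_dvd, ?_, fun r hr => ?_⟩
  · rw [← h.map.countP_roots ht (IsAlgClosed.splits _), Multiset.countP_eq_card_filter, ← g_roots,
      IsAlgClosed.card_roots_map_eq_natDegree_from_simpleRing]
  · have r_mem : r ∈ (g.map (algebraMap K L)).roots :=
      (mem_roots (map_monic_ne_zero g_monic)).2 hr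
    rw [g_roots] at r_mem
    exact (Multiset.mem_filter.1 r_mem).2

theorem newton_polygon_factorisation_general (hv : ∀ x y, IsConjRoot K x y → v x = v y)
    {f : K[X]} (hf : f ≠ 0) {s : ℕ} {i : Fin (s + 1) → ℕ} {t : Fin s → Γ₀}
    (h : IsNewtonPolygon (v.comap (algebraMap K L)) f i t) :
    ∃ (u : K) (g : Fin s → K[X]), u ≠ 0 ∧ f = C u * X ^ (i 0) * ∏ j, g j ∧
      ∀ j, (g j).Monic ∧ (g j).natDegree = i j.succ - i j.castSucc ∧
        ∀ r : L, ((g j).map (algebraMap K L)).IsRoot r → v r = t j := by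
  choose g g_monic g_dvd g_degree g_root using fun j =>
    (h.face j).exists_monic_dvd hv (h.radius_ne_zero j)
  refine ⟨f.leadingCoeff, g, leadingCoeff_ne_zero.2 hf, ?_,
    fun j => ⟨g_monic j, g_degree j, g_root j⟩⟩
  let factor : Fin (s + 1) → K[X] := Fin.cons (X ^ i 0) g
  let radius : Fin (s + 1) → Γ₀ := Fin.cons 0 t
  have radius_injective : Function.Injective radius :=
    Fin.cons_injective_iff.2 ⟨by simpa using h.radius_ne_zero, h.radius_injective⟩
  have factor_monic : ∀ j, (factor j).Monic := Fin.cases (monic_X_pow _) g_monic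
  have factor_dvd : ∀ j, factor j ∣ f := by
    refine Fin.cases (X_pow_dvd_iff.2 fun m hm => ?_) g_dvd
    exact coeff_eq_zero_of_lt_natTrailingDegree (h.first ▸ hm)
  have factor_root : ∀ (j) (r : L),
      ((factor j).map (algebraMap K L)).IsRoot r → v r = radius j := by
    refine Fin.cases (fun r hr => ?_) g_root
    have r_pow : r ^ i 0 = 0 := by simpa [factor] using hr
    simp [radius, eq_zero_of_pow_eq_zero r_pow]
  have degree_le : f.natDegree ≤ ∑ j, (factor j).natDegree := by
    simp [factor, Fin.sum_univ_succ, g_degree, add_sum_succ_sub_castSucc h.strictMono.monotone,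
      h.last]
  have f_eq := eq_C_leadingCoeff_mul_prod factor_monic factor_dvd
    (fun j k hjk => isCoprime_of_forall_root_eq (radius_injective.ne hjk) (factor_root j)
      (factor_root k)) degree_le
  rwa [Fin.prod_univ_succ, ← mul_assoc] at f_eq

end Factorisation

section Exponential

/-- The order-reversing exponential `q ↦ 2 ^ (-q)`, `⊤ ↦ 0`, turning additive valuations into
multiplicative ones. -/
noncomputable def expNeg : WithTop ℚ → ℝ≥0 :=
  WithTop.recTopCoe 0 fun q => 2 ^ (-q : ℝ)

@[simp]
lemma expNeg_top : expNeg ⊤ = 0 := rfl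

lemma expNeg_coe (q : ℚ) : expNeg q = 2 ^ (-q : ℝ) := rfl

lemma expNeg_coe_pos (q : ℚ) : 0 < expNeg q :=
  NNReal.rpow_pos two_pos

lemma expNeg_strictAnti : StrictAnti expNeg := by
  refine WithTop.strictAnti_iff.2 ⟨fun p q hpq => ?_, expNeg_coe_pos⟩
  change expNeg q < expNeg p
  rw [expNeg_coe, expNeg_coe]
  exact NNReal.rpow_lt_rpow_of_exponent_lt one_lt_two (by simpa using hpq)

@[simp]
lemma expNeg_zero : expNeg 0 = 1 := by
  rw [← WithTop.coe_zero, expNeg_coe, Rat.cast_zero, neg_zero, NNReal.rpow_zero]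

lemma expNeg_add (a b : WithTop ℚ) : expNeg (a + b) = expNeg a * expNeg b := by
  induction a with
  | top => simp
  | coe p =>
    induction b with
    | top => simp
    | coe q =>
      rw [← WithTop.coe_add, expNeg_coe, expNeg_coe, expNeg_coe, Rat.cast_add, neg_add,
        NNReal.rpow_add two_ne_zero]

lemma expNeg_coe_pow (q : ℚ) (m : ℕ) : expNeg q ^ m = expNeg ((m * q : ℚ) : WithTop ℚ) := by
  rw [expNeg_coe, expNeg_coe, ← NNReal.rpow_mul_natCast]
  congr 1
  push_cast
  ring

lemma exists_expNeg_coe_lt {ε : ℝ≥0} (hε : 0 < ε) : ∃ q : ℚ, expNeg q < ε := by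
  obtain ⟨n, hn⟩ := exists_pow_lt_of_lt_one hε (show expNeg (1 : ℚ) < 1 from
    expNeg_zero ▸ expNeg_strictAnti zero_lt_one)
  exact ⟨_, expNeg_coe_pow 1 n ▸ hn⟩

end Exponential

section UniqueExtension

/-- A valuation with values in `ℝ≥0`, seen as a real absolute value. -/
noncomputable def realAbsoluteValue {F : Type*} [Field F] (v : Valuation F ℝ≥0) :
    AbsoluteValue F ℝ where
  toFun x := v x
  map_mul' x y := by rw [map_mul, NNReal.coe_mul]
  nonneg' x := NNReal.coe_nonneg (v x)
  eq_zero' x := by rw [NNReal.coe_eq_zero, v.zero_iff]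
  add_le' x y := by
    exact_mod_cast (v.map_add x y).trans (max_le_add_of_nonneg zero_le zero_le)

lemma eq_of_isConjRoot_of_extends_norm {K L : Type*} [NontriviallyNormedField K]
    [IsUltrametricDist K] [CompleteSpace K] [Field L] [Algebra K L] [Algebra.IsAlgebraic K L]
    {v : Valuation L ℝ≥0} (hv : ∀ x : K, v (algebraMap K L x) = ‖x‖) {x y : L}
    (h : IsConjRoot K x y) : v x = v y := by
  have v_eq_spectralNorm (z : L) : (v z : ℝ) = spectralNorm K L z :=
    spectralNorm_unique_field_norm_ext (f := realAbsoluteValue v) hv z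
  rw [← NNReal.coe_inj, v_eq_spectralNorm, v_eq_spectralNorm, spectralNorm, spectralNorm, h]

end UniqueExtension

namespace Setup

variable (S : Setup K Kbar)

lemma ne_zero_of_vK_eq_coe {x : K} {q : ℚ} (h : S.vK x = q) : x ≠ 0 := by
  rintro rfl
  rw [vK, map_zero, (S.v_top_iff 0).2 rfl] at h
  exact WithTop.top_ne_coe h

lemma exists_vK_eq_coe {x : K} (hx : x ≠ 0) : ∃ q : ℚ, S.vK x = q := by
  obtain ⟨n, hn⟩ := S.v_base_int x hx
  exact ⟨n, hn⟩

/-- The valuation of `S` in multiplicative notation. -/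
noncomputable def valuation : Valuation Kbar ℝ≥0 where
  toFun x := expNeg (S.v x)
  map_zero' := by rw [(S.v_top_iff 0).2 rfl, expNeg_top]
  map_one' := by rw [S.v_one, expNeg_zero]
  map_mul' x y := by rw [S.v_mul, expNeg_add]
  map_add_le_max' x y := by
    rw [← expNeg_strictAnti.antitone.map_min]
    exact expNeg_strictAnti.antitone (S.v_add x y)

lemma valuation_apply (x : Kbar) : S.valuation x = expNeg (S.v x) := rfl

/-- The base field `K` normed by the restriction of the valuation. -/
@[reducible]
noncomputable def nontriviallyNormedField : NontriviallyNormedField K :=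
  letI := (realAbsoluteValue (S.valuation.comap (algebraMap K Kbar))).toNormedField
  .ofNormNeOne <| by
    obtain ⟨π, hπ⟩ := S.exists_uniformiser
    have norm_π : ‖π‖ < 1 := by
      change (expNeg (S.v (algebraMap K Kbar π)) : ℝ) < 1
      rw [hπ, ← NNReal.coe_one, ← expNeg_zero]
      exact_mod_cast expNeg_strictAnti zero_lt_one
    exact ⟨π, S.ne_zero_of_vK_eq_coe hπ, norm_π.ne⟩

lemma norm_eq (x : K) : letI := S.nontriviallyNormedField
    ‖x‖ = expNeg (S.v (algebraMap K Kbar x)) := rfl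

lemma isUltrametricDist : letI := S.nontriviallyNormedField
    IsUltrametricDist K := by
  let := S.nontriviallyNormedField
  refine IsUltrametricDist.isUltrametricDist_of_isNonarchimedean_norm fun x y => ?_
  exact_mod_cast (S.valuation.comap (algebraMap K Kbar)).map_add x y

lemma dist_le_expNeg_iff (x y : K) (q : ℚ) : letI := S.nontriviallyNormedField
    dist x y ≤ expNeg q ↔ q ≤ S.v (algebraMap K Kbar (x - y)) := by
  let := S.nontriviallyNormedField
  rw [dist_eq_norm, S.norm_eq, NNReal.coe_le_coe, expNeg_strictAnti.le_iff_ge]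

lemma completeSpace : letI := S.nontriviallyNormedField
    CompleteSpace K := by
  let := S.nontriviallyNormedField
  refine Metric.complete_of_cauchySeq_tendsto fun a ha => ?_
  obtain ⟨b, hb⟩ := S.complete a fun q => by
    obtain ⟨N, hN⟩ := Metric.cauchySeq_iff.1 ha _ (expNeg_coe_pos q)
    exact ⟨N, fun m hm n hn => (S.dist_le_expNeg_iff _ _ q).1 (hN m hm n hn).le⟩
  refine ⟨b, Metric.tendsto_atTop.2 fun ε hε => ?_⟩
  obtain ⟨q, hq⟩ := exists_expNeg_coe_lt (Real.toNNReal_pos.2 hε)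
  obtain ⟨N, hN⟩ := hb q
  exact ⟨N, fun n hn =>
    ((S.dist_le_expNeg_iff _ _ q).2 (hN n hn)).trans_lt (Real.lt_toNNReal_iff_coe_lt.1 hq)⟩

lemma valuation_eq_of_isConjRoot {x y : Kbar} (h : IsConjRoot K x y) :
    S.valuation x = S.valuation y := by
  let := S.nontriviallyNormedField
  have := S.isUltrametricDist
  have := S.completeSpace
  have := S.algebraic
  exact eq_of_isConjRoot_of_extends_norm (fun z => (S.norm_eq z).symm) h

end Setup

namespace IsNPVertices

variable {S : Setup K Kbar} {f : K[X]} {s : ℕ} {i : Fin (s + 1) → ℕ} {c : Fin (s + 1) → ℚ}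

lemma edge_length_pos (h : IsNPVertices S f s i c) (j : Fin s) :
    (0 : ℚ) < i j.succ - i j.castSucc :=
  sub_pos.2 (Nat.cast_lt.2 (h.mono j.castSucc_lt_succ))

lemma slope_mul_length (h : IsNPVertices S f s i c) (j : Fin s) :
    NPslope i c j * (i j.succ - i j.castSucc) = c j.succ - c j.castSucc :=
  div_mul_cancel₀ _ (h.edge_length_pos j).ne'

lemma slope_mul_le (h : IsNPVertices S f s i c) (j : Fin s) {m : ℕ} {q : ℚ}
    (hq : S.vK (f.coeff m) = q) : NPslope i c j * (m - i j.castSucc) ≤ q - c j.castSucc := by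
  refine le_of_mul_le_mul_right ?_ (h.edge_length_pos j)
  rw [mul_right_comm, h.slope_mul_length]
  exact h.support j m q hq

lemma slope_mul_lt_of_lt (h : IsNPVertices S f s i c) {j : Fin s} {m : ℕ} {q : ℚ}
    (hm : m < i j.castSucc) (hq : S.vK (f.coeff m) = q) :
    NPslope i c j * (m - i j.castSucc) < q - c j.castSucc := by
  obtain h_zero | ⟨k, hk⟩ := Fin.eq_zero_or_eq_succ j.castSucc
  · rw [h_zero, h.first] at hm
    exact absurd (coeff_eq_zero_of_lt_natTrailingDegree hm) (S.ne_zero_of_vK_eq_coe hq)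
  · have slope_lt : NPslope i c k < NPslope i c j :=
      h.slope_mono (Fin.castSucc_lt_castSucc_iff.1 (hk ▸ k.castSucc_lt_succ))
    have hm' : (m : ℚ) < i j.castSucc := Nat.cast_lt.2 hm
    rw [hk] at hm' ⊢
    calc NPslope i c j * (m - i k.succ) < NPslope i c k * (m - i k.succ) :=
          mul_lt_mul_of_neg_right slope_lt (sub_neg.2 hm')
      _ = NPslope i c k * (m - i k.castSucc) - (c k.succ - c k.castSucc) := by
          rw [← h.slope_mul_length]; ring
      _ ≤ q - c k.succ := by linarith [h.slope_mul_le k hq]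

lemma slope_mul_lt_of_gt (h : IsNPVertices S f s i c) {j : Fin s} {m : ℕ} {q : ℚ}
    (hm : i j.succ < m) (hq : S.vK (f.coeff m) = q) :
    NPslope i c j * (m - i j.castSucc) < q - c j.castSucc := by
  obtain ⟨k, hk⟩ | h_last := Fin.eq_castSucc_or_eq_last j.succ
  · have slope_lt : NPslope i c j < NPslope i c k :=
      h.slope_mono (Fin.succ_lt_succ_iff.1 (hk ▸ k.castSucc_lt_succ))
    have hm' : (i j.succ : ℚ) < m := Nat.cast_lt.2 hm
    calc NPslope i c j * (m - i j.castSucc)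
        = NPslope i c j * (m - i j.succ) + (c j.succ - c j.castSucc) := by
          rw [← h.slope_mul_length]; ring
      _ < NPslope i c k * (m - i j.succ) + (c j.succ - c j.castSucc) := by
          gcongr
      _ ≤ q - c j.castSucc := by
          rw [hk]
          linarith [h.slope_mul_le k hq]
  · rw [h_last, h.last] at hm
    exact absurd (coeff_eq_zero_of_natDegree_lt hm) (S.ne_zero_of_vK_eq_coe hq)

lemma termValue_eq (i : Fin (s + 1) → ℕ) (c : Fin (s + 1) → ℚ) (j : Fin s) {m : ℕ} {q : ℚ}
    (hq : S.vK (f.coeff m) = q) :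
    termValue (S.valuation.comap (algebraMap K Kbar)) (expNeg (-NPslope i c j : ℚ)) f m =
      expNeg (q - NPslope i c j * m : ℚ) := by
  rw [termValue, Valuation.comap_apply, S.valuation_apply, ← Setup.vK, hq, expNeg_coe_pow,
    ← expNeg_add, ← WithTop.coe_add]
  congr 2
  ring

lemma termValue_le_start (h : IsNPVertices S f s i c) (j : Fin s) (m : ℕ) :
    termValue (S.valuation.comap (algebraMap K Kbar)) (expNeg (-NPslope i c j : ℚ)) f m ≤
      termValue (S.valuation.comap (algebraMap K Kbar)) (expNeg (-NPslope i c j : ℚ)) f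
        (i j.castSucc) := by
  rcases eq_or_ne (f.coeff m) 0 with h_zero | h_zero
  · simp [termValue, h_zero]
  · obtain ⟨q, hq⟩ := S.exists_vK_eq_coe h_zero
    rw [termValue_eq i c j hq, termValue_eq i c j (h.vert j.castSucc)]
    refine expNeg_strictAnti.antitone (WithTop.coe_le_coe.2 ?_)
    linarith [h.slope_mul_le j hq]

lemma termValue_lt_start (h : IsNPVertices S f s i c) (j : Fin s) {m : ℕ}
    (hm : ∀ q : ℚ, S.vK (f.coeff m) = q →
      NPslope i c j * (m - i j.castSucc) < q - c j.castSucc) :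
    termValue (S.valuation.comap (algebraMap K Kbar)) (expNeg (-NPslope i c j : ℚ)) f m <
      termValue (S.valuation.comap (algebraMap K Kbar)) (expNeg (-NPslope i c j : ℚ)) f
        (i j.castSucc) := by
  rw [termValue_eq i c j (h.vert j.castSucc)]
  rcases eq_or_ne (f.coeff m) 0 with h_zero | h_zero
  · rw [termValue, h_zero, map_zero, zero_mul]
    exact expNeg_coe_pos _
  · obtain ⟨q, hq⟩ := S.exists_vK_eq_coe h_zero
    rw [termValue_eq i c j hq]
    refine expNeg_strictAnti (WithTop.coe_lt_coe.2 ?_)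
    linarith [hm q hq]

lemma isNewtonFace (h : IsNPVertices S f s i c) (j : Fin s) :
    IsNewtonFace (S.valuation.comap (algebraMap K Kbar)) (expNeg (-NPslope i c j : ℚ)) f
      (i j.castSucc) (i j.succ) where
  le := h.termValue_le_start j
  eq := by
    rw [termValue_eq i c j (h.vert j.succ), termValue_eq i c j (h.vert j.castSucc)]
    congr 2
    linarith [h.slope_mul_length j]
  lt_of_lt _ hm := h.termValue_lt_start j fun _ => h.slope_mul_lt_of_lt hm
  lt_of_gt _ hm := h.termValue_lt_start j fun _ => h.slope_mul_lt_of_gt hm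

lemma isNewtonPolygon (h : IsNPVertices S f s i c) :
    IsNewtonPolygon (S.valuation.comap (algebraMap K Kbar)) f i
      fun j => expNeg (-NPslope i c j : ℚ) :=
  ⟨h.mono, h.first, h.last, fun _ => (expNeg_coe_pos _).ne', h.isNewtonFace⟩

end IsNPVertices

/-- **Newton polygon factorisation.** Let `f = Σ a_i x^i ∈ K[x]` with `a_d ≠ 0`, and let
`i_0 < … < i_s` be the vertices of `NP(f)`, with `ρ_j` the slope of the `j`-th edge. Then
`f = c·x^{i_0}·g_1⋯g_s` over `K`, with `c ∈ K^×`, `g_j` monic of degree `i_j − i_{j−1}`,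
all of whose roots in `K̄` have valuation `−ρ_j`. -/
theorem newton_polygon_factorisation
    (S : Setup K Kbar) (f : K[X]) (hf : f ≠ 0)
    (s : ℕ) (i : Fin (s + 1) → ℕ) (c : Fin (s + 1) → ℚ)
    (hNP : IsNPVertices S f s i c) :
    ∃ (u : K) (g : Fin s → K[X]), u ≠ 0 ∧
      f = Polynomial.C u * Polynomial.X ^ (i 0) * ∏ j, g j ∧
      ∀ j : Fin s, (g j).Monic ∧
        (g j).natDegree = i j.succ - i j.castSucc ∧
        ∀ r : Kbar, ((g j).map (algebraMap K Kbar)).IsRoot r →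
          S.v r = ((-(NPslope i c j) : ℚ) : WithTop ℚ) := by
  have := S.algClosed
  have factorisation := newton_polygon_factorisation_general
    (fun _ _ => S.valuation_eq_of_isConjRoot) hf hNP.isNewtonPolygon
  simpa only [S.valuation_apply, expNeg_strictAnti.injective.eq_iff] using factorisation

end ClusterPicture
end

section
/- Let f ∈ K[x] with f(0) ≠ 0, and let f = c·g_1⋯g_s be the Newton polygon factorization, i.e. c ∈ K^×, each g_j ∈ K[x] is monic, NP(g_j) consists of a single edge of slope ρ_j, and ρ_1 < ρ_2 < … < ρ_s are the slopes of the edges of NP(f). Then f is NP-regular if and only if g_j is NP-regular for every j = 1,…,s. -/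
open Polynomial
open scoped Classical

namespace ClusterPicture

variable {K Kbar : Type*} [Field K] [Field Kbar] [Algebra K Kbar]

/-!
Substituting `x / t` for `x`, where `v(t) = σ`, and reducing a suitable multiple gives `x^a R(x^n)`,
where `n` is the denominator of `σ` and `R(0) ≠ 0`. Up to a unit, `R` is the reduction of `f` along
the edge of slope `σ` of its Newton polygon, and `R` is constant if there is no such edge. So `f` is
NP-regular if and only if all these residual polynomials are separable. By Gauss's lemma they are
multiplicative in `f`, so the one of a factor divides the one of the product. If no two factors
share a slope, then for each `σ` at most one factor has a nonconstant residual polynomial; the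
residual polynomials of the factors are therefore pairwise coprime, and their product is separable
as soon as each of them is.
-/

section Face

variable {𝕜 : Type*} [Field 𝕜] [LinearOrder 𝕜]

/-- The face cut out by its supporting line of slope `σ` on the lower convex hull of the points
`(m, h m)`, `m ∈ A`: the line `y = w + σ x` lies below all the points, and `a` and `b` are the
least and the greatest abscissa of a point on it. The face is a vertex if `a = b` and an edge if
`a < b`. -/
structure IsFace (A : Finset ℕ) (h : ℕ → 𝕜) (σ w : 𝕜) (a b : ℕ) : Prop where
  left_mem : a ∈ A
  right_mem : b ∈ A
  left_eq : h a = w + σ * a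
  right_eq : h b = w + σ * b
  le : ∀ m ∈ A, w + σ * m ≤ h m
  left_le : ∀ m ∈ A, h m = w + σ * m → a ≤ m
  le_right : ∀ m ∈ A, h m = w + σ * m → m ≤ b

namespace IsFace

variable {A : Finset ℕ} {h : ℕ → 𝕜} {σ σ' w w' : 𝕜} {a b a' b' : ℕ}

lemma left_le_right (H : IsFace A h σ w a b) : a ≤ b := H.left_le b H.right_mem H.right_eq

lemma lt_of_right_lt (H : IsFace A h σ w a b) {m : ℕ} (hm : m ∈ A) (hbm : b < m) :
    w + σ * m < h m :=
  (H.le m hm).lt_of_ne fun e => hbm.not_ge (H.le_right m hm e.symm)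

variable [IsStrictOrderedRing 𝕜]

lemma unique (H : IsFace A h σ w a b) (H' : IsFace A h σ w' a' b') : a = a' ∧ b = b' := by
  obtain rfl : w = w' := by
    linarith [H.le a' H'.left_mem, H'.le a H.left_mem, H.left_eq, H'.left_eq]
  exact ⟨(H.left_le a' H'.left_mem H'.left_eq).antisymm (H'.left_le a H.left_mem H.left_eq),
    (H'.le_right b H.right_mem H.right_eq).antisymm (H.le_right b' H'.right_mem H'.right_eq)⟩

lemma right_le_left_of_slope_lt (H : IsFace A h σ w a b) (H' : IsFace A h σ' w' a' b')
    (hσ : σ < σ') : b ≤ a' := by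
  by_contra! hlt
  have hlt' : (a' : 𝕜) < b := by exact_mod_cast hlt
  nlinarith [H.le a' H'.left_mem, H'.le b H.right_mem, H.right_eq, H'.left_eq]

lemma slope_lt_of_right_lt (H : IsFace A h σ w a b) (H' : IsFace A h σ' w' a' b')
    (hb : b < b') : σ < σ' := by
  rcases lt_trichotomy σ σ' with hσ | rfl | hσ
  · exact hσ
  · exact absurd (H.unique H').2 hb.ne
  · exact absurd (H'.right_le_left_of_slope_lt H hσ) (H.left_le_right.trans_lt hb).not_ge

lemma slope_eq_of_mem_Ico (H : IsFace A h σ w a b) (H' : IsFace A h σ' w' a' b')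
    (hab : a < b) (ha : a ∈ Set.Ico a' b') : σ = σ' := by
  rcases lt_trichotomy σ σ' with hσ | hσ | hσ
  · exact absurd (H.right_le_left_of_slope_lt H' hσ) (ha.1.trans_lt hab).not_ge
  · exact hσ
  · exact absurd (H'.right_le_left_of_slope_lt H hσ) ha.2.not_ge

variable (h) in
lemma exists_min' (hA : A.Nonempty) : ∃ σ w : 𝕜, IsFace A h σ w (A.min' hA) (A.min' hA) := by
  set a := A.min' hA
  have ha : a ∈ A := A.min'_mem hA
  obtain ⟨M, hM⟩ := (A.image fun m : ℕ => (h m - h a) / ((m : 𝕜) - a)).bddBelow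
  have hlt : ∀ m ∈ A, m ≠ a → (h a - (M - 1) * a) + (M - 1) * m < h m := by
    intro m hm hne
    have ham : (a : 𝕜) < m := by exact_mod_cast (A.min'_le m hm).lt_of_ne hne.symm
    have hMm := hM (Finset.mem_coe.mpr (Finset.mem_image_of_mem _ hm))
    linarith [(le_div_iff₀ (sub_pos.mpr ham)).mp hMm]
  have heq : h a = (h a - (M - 1) * a) + (M - 1) * a := (sub_add_cancel _ _).symm
  have hon : ∀ m ∈ A, h m = (h a - (M - 1) * a) + (M - 1) * m → m = a := fun m hm e =>
    by_contra fun hne => (hlt m hm hne).ne' e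
  refine ⟨M - 1, _, ha, ha, heq, heq, fun m hm => ?_,
    fun m hm e => (hon m hm e).ge, fun m hm e => (hon m hm e).le⟩
  rcases eq_or_ne m a with rfl | hne
  · exact heq.ge
  · exact (hlt m hm hne).le

-- The next edge is the one of least slope among the segments from `b` to the points beyond it.
lemma exists_next (H : IsFace A h σ w a b) (hb : ∃ m ∈ A, b < m) :
    ∃ σ' w' b', b < b' ∧ IsFace A h σ' w' b b' := by
  obtain ⟨m₀, hm₀, hmin⟩ := (A.filter (b < ·)).exists_min_image
    (fun m : ℕ => (h m - h b) / ((m : 𝕜) - b)) (by simpa [Finset.Nonempty] using hb)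
  simp only [Finset.mem_filter, and_imp] at hm₀ hmin
  set τ := (h m₀ - h b) / ((m₀ : 𝕜) - b)
  have hpos {m : ℕ} (hbm : b < m) : 0 < (m : 𝕜) - b := sub_pos.mpr (by exact_mod_cast hbm)
  have hm₀_eq : h m₀ = (h b - τ * b) + τ * m₀ := by
    linarith [div_mul_cancel₀ (h m₀ - h b) (hpos hm₀.2).ne']
  have hστ : σ < τ := by
    rw [lt_div_iff₀ (hpos hm₀.2)]
    linarith [H.lt_of_right_lt hm₀.1 hm₀.2, H.right_eq]
  have hleft : ∀ m ∈ A, m < b → (h b - τ * b) + τ * m < h m := by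
    intro m hm hmb
    have hmb' : (m : 𝕜) < b := by exact_mod_cast hmb
    nlinarith [H.le m hm, H.right_eq]
  have hright : ∀ m ∈ A, b < m → (h b - τ * b) + τ * m ≤ h m := by
    intro m hm hbm
    linarith [(le_div_iff₀ (hpos hbm)).mp (hmin m hm hbm)]
  obtain ⟨b', hb', hmax⟩ := (A.filter fun m : ℕ => h m = (h b - τ * b) + τ * m).exists_max_image id
    ⟨m₀, Finset.mem_filter.mpr ⟨hm₀.1, hm₀_eq⟩⟩
  simp only [Finset.mem_filter, and_imp, id] at hb' hmax
  refine ⟨τ, _, b', hm₀.2.trans_le (hmax m₀ hm₀.1 hm₀_eq), H.right_mem, hb'.1,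
    (sub_add_cancel _ _).symm, hb'.2, fun m hm => ?_, fun m hm e => ?_, hmax⟩
  · rcases lt_trichotomy m b with hmb | rfl | hbm
    · exact (hleft m hm hmb).le
    · exact (sub_add_cancel _ _).le
    · exact hright m hm hbm
  · exact not_lt.mp fun hmb => (hleft m hm hmb).ne' e

variable (h) in
lemma exists_max' (hA : A.Nonempty) : ∃ (σ w : 𝕜) (a : ℕ), IsFace A h σ w a (A.max' hA) := by
  let V := A.filter fun b => ∃ (σ w : 𝕜) (a : ℕ), IsFace A h σ w a b
  obtain ⟨σ₀, w₀, H₀⟩ := exists_min' h hA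
  have hV : V.Nonempty := ⟨_, Finset.mem_filter.mpr ⟨H₀.right_mem, σ₀, w₀, _, H₀⟩⟩
  obtain ⟨hb, σ, w, a, H⟩ := Finset.mem_filter.mp (V.max'_mem hV)
  suffices hle : A.max' hA ≤ V.max' hV from ⟨σ, w, a, (A.le_max' _ hb).antisymm hle ▸ H⟩
  by_contra! hlt
  obtain ⟨σ', w', b', hbb', H'⟩ := H.exists_next ⟨_, A.max'_mem hA, hlt⟩
  exact hbb'.not_ge (V.le_max' b' (Finset.mem_filter.mpr ⟨H'.right_mem, σ', w', _, H'⟩))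

theorem exists_vertices (A : Finset ℕ) (h : ℕ → 𝕜) (hA : A.Nonempty) :
    ∃ (s : ℕ) (i : Fin (s + 1) → ℕ), StrictMono i ∧ i 0 = A.min' hA ∧
      i (Fin.last s) = A.max' hA ∧
      ∀ j : Fin s, ∃ σ w : 𝕜, IsFace A h σ w (i j.castSucc) (i j.succ) := by
  let V := A.filter fun b => ∃ (σ w : 𝕜) (a : ℕ), IsFace A h σ w a b
  have mem_V {σ w : 𝕜} {a b : ℕ} (H : IsFace A h σ w a b) : b ∈ V :=
    Finset.mem_filter.mpr ⟨H.right_mem, σ, w, a, H⟩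
  have hmin : A.min' hA ∈ V := have ⟨_, _, H⟩ := exists_min' h hA; mem_V H
  have hmax : A.max' hA ∈ V := have ⟨_, _, _, H⟩ := exists_max' h hA; mem_V H
  obtain ⟨s, hs⟩ := Nat.exists_eq_succ_of_ne_zero (Finset.card_ne_zero_of_mem hmin)
  let i := V.orderEmbOfFin hs
  have hmem (j) : i j ∈ A ∧ ∃ (σ w : 𝕜) (a : ℕ), IsFace A h σ w a (i j) :=
    Finset.mem_filter.mp (V.orderEmbOfFin_mem hs j)
  have hsurj {m : ℕ} (hm : m ∈ V) : ∃ j, i j = m := by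
    rwa [← Finset.mem_coe, ← V.range_orderEmbOfFin hs] at hm
  refine ⟨s, i, i.strictMono, ?_, ?_, fun j => ?_⟩
  · obtain ⟨k, hk⟩ := hsurj hmin
    exact (hk ▸ i.monotone (Fin.zero_le k)).antisymm (A.min'_le _ (hmem 0).1)
  · obtain ⟨k, hk⟩ := hsurj hmax
    exact (A.le_max' _ (hmem _).1).antisymm (hk ▸ i.monotone (Fin.le_last k))
  · have hlt : i j.castSucc < i j.succ := i.strictMono Fin.castSucc_lt_succ
    obtain ⟨hsucc, _, _, _, H'⟩ := hmem j.succ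
    obtain ⟨_, _, _, _, H₀⟩ := hmem j.castSucc
    obtain ⟨σ, w, b', hlt', H⟩ := H₀.exists_next ⟨_, hsucc, hlt⟩
    have hle : i j.succ ≤ b' := by
      obtain ⟨k, rfl⟩ := hsurj (mem_V H)
      exact i.monotone (Fin.castSucc_lt_iff_succ_le.mp (i.strictMono.lt_iff_lt.mp hlt'))
    rcases hle.eq_or_lt with heq | hlt''
    · exact ⟨σ, w, heq ▸ H⟩
    · exact absurd (H'.right_le_left_of_slope_lt H (H'.slope_lt_of_right_lt H hlt'')) hlt.not_ge

end IsFace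

end Face

namespace Setup

variable (S : Setup K Kbar)

/-- The valuation of a nonzero element of `Kbar` as a rational number, with the junk value `0`
at `0`. -/
def ord (x : Kbar) : ℚ := (S.v x).untopD 0

lemma ord_zero : S.ord 0 = 0 := by simp [ord, (S.v_top_iff 0).mpr rfl]

lemma ord_one : S.ord 1 = 0 := by simp [ord, S.v_one]

variable {S}

lemma coe_ord {x : Kbar} (hx : x ≠ 0) : (S.ord x : WithTop ℚ) = S.v x := by
  obtain ⟨q, hq⟩ := WithTop.ne_top_iff_exists.mp (mt (S.v_top_iff x).mp hx)
  simp [ord, ← hq]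

lemma v_eq_coe_iff {x : Kbar} {q : ℚ} : S.v x = q ↔ x ≠ 0 ∧ S.ord x = q := by
  rcases eq_or_ne x 0 with rfl | hx
  · simp [(S.v_top_iff 0).mpr rfl]
  · simp [← coe_ord hx, hx]

lemma ord_mul {x y : Kbar} (hx : x ≠ 0) (hy : y ≠ 0) : S.ord (x * y) = S.ord x + S.ord y := by
  have h := S.v_mul x y
  rw [← coe_ord hx, ← coe_ord hy, ← coe_ord (mul_ne_zero hx hy)] at h
  exact_mod_cast h

lemma ord_inv (x : Kbar) : S.ord x⁻¹ = -S.ord x := by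
  rcases eq_or_ne x 0 with rfl | hx
  · simp [ord_zero]
  · rw [eq_neg_iff_add_eq_zero, ← ord_mul (inv_ne_zero hx) hx, inv_mul_cancel₀ hx, ord_one]

lemma ord_pow (x : Kbar) (n : ℕ) : S.ord (x ^ n) = n * S.ord x := by
  rcases eq_or_ne x 0 with rfl | hx
  · rcases eq_or_ne n 0 with rfl | hn <;> simp [ord_zero, ord_one, *]
  · induction n with
    | zero => simp [ord_one]
    | succ n ih => rw [pow_succ, ord_mul (pow_ne_zero n hx) hx, ih]; push_cast; ring

lemma ord_zpow (x : Kbar) (n : ℤ) : S.ord (x ^ n) = n * S.ord x := by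
  cases n with
  | ofNat n => simp [ord_pow]
  | negSucc n => rw [zpow_negSucc, ord_inv, ord_pow]; push_cast; ring

lemma exists_pow_den_eq_zpow_num (S : Setup K Kbar) (x : Kbar) (σ : ℚ) :
    ∃ t : Kbar, t ^ σ.den = x ^ σ.num :=
  have := S.algClosed
  IsAlgClosed.exists_pow_nat_eq _ σ.den_pos

lemma v_eq_of_pow_den_eq_zpow_num {x t : Kbar} {σ : ℚ} (hx : S.v x = (1 : ℚ))
    (ht : t ^ σ.den = x ^ σ.num) : S.v t = σ := by
  obtain ⟨hx0, hx1⟩ := v_eq_coe_iff.mp hx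
  refine v_eq_coe_iff.mpr ⟨ne_zero_pow σ.den_nz (ht ▸ zpow_ne_zero _ hx0), ?_⟩
  have h := congrArg S.ord ht
  rw [ord_pow, ord_zpow, hx1, mul_one, ← σ.mul_den_eq_num, mul_comm] at h
  exact mul_right_cancel₀ (by exact_mod_cast σ.den_nz) h

end Setup

open Setup

section Height

/-- The height `v(a_m)` of the point of the Newton polygon of `f = ∑ a_m x^m` above `m`, with the
junk value `0` if `a_m = 0`. -/
def height (S : Setup K Kbar) (f : K[X]) (m : ℕ) : ℚ := S.ord (algebraMap K Kbar (f.coeff m))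

variable {S : Setup K Kbar} {f : K[X]}

lemma vK_coeff_eq_coe_iff {m : ℕ} {q : ℚ} :
    S.vK (f.coeff m) = q ↔ m ∈ f.support ∧ height S f m = q := by
  rw [Setup.vK, v_eq_coe_iff, mem_support_iff, height, Ne,
    map_eq_zero_iff _ (algebraMap K Kbar).injective]

lemma exists_height_eq_intCast {m : ℕ} (hm : m ∈ f.support) : ∃ q : ℤ, (q : ℚ) = height S f m := by
  obtain ⟨q, hq⟩ := S.v_base_int _ (mem_support_iff.mp hm)
  exact ⟨q, (v_eq_coe_iff.mp hq).2.symm⟩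

end Height

section NewtonPolygon

variable {S : Setup K Kbar} {π : K} {f : K[X]}

/-- The slopes of the edges of the Newton polygon of `f`. -/
def newtonSlopes (S : Setup K Kbar) (f : K[X]) : Set ℚ :=
  {σ | ∃ w a b, IsFace f.support (height S f) σ w a b ∧ a < b}

namespace IsNPVertices

variable {s : ℕ} {i : Fin (s + 1) → ℕ} {c : Fin (s + 1) → ℚ}

lemma mem_support (hN : IsNPVertices S f s i c) (j : Fin (s + 1)) : i j ∈ f.support :=
  (vK_coeff_eq_coe_iff.mp (hN.vert j)).1

lemma height_eq (hN : IsNPVertices S f s i c) (j : Fin (s + 1)) : height S f (i j) = c j :=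
  (vK_coeff_eq_coe_iff.mp (hN.vert j)).2

lemma edge_pos (hN : IsNPVertices S f s i c) (j : Fin s) :
    (0 : ℚ) < i j.succ - i j.castSucc :=
  sub_pos.mpr (by exact_mod_cast hN.mono Fin.castSucc_lt_succ)

lemma right_eq (hN : IsNPVertices S f s i c) (j : Fin s) :
    c j.succ = c j.castSucc + NPslope i c j * (i j.succ - i j.castSucc) := by
  rw [NPslope, div_mul_cancel₀ _ (hN.edge_pos j).ne', add_sub_cancel]

lemma line_le_height (hN : IsNPVertices S f s i c) (j : Fin s) {m : ℕ} (hm : m ∈ f.support) :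
    c j.castSucc + NPslope i c j * (m - i j.castSucc) ≤ height S f m := by
  have h := hN.support j m _ (vK_coeff_eq_coe_iff.mpr ⟨hm, rfl⟩)
  have hpos := hN.edge_pos j
  rw [← le_sub_iff_add_le', NPslope, div_mul_eq_mul_div]
  exact (div_le_iff₀ hpos).mpr h

theorem isFace (hN : IsNPVertices S f s i c) (j : Fin s) :
    IsFace f.support (height S f) (NPslope i c j)
      (c j.castSucc - NPslope i c j * i j.castSucc) (i j.castSucc) (i j.succ) where
  left_mem := hN.mem_support _
  right_mem := hN.mem_support _
  left_eq := by rw [hN.height_eq]; ring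
  right_eq := by rw [hN.height_eq, hN.right_eq]; ring
  le m hm := by linarith [hN.line_le_height j hm]
  left_le m hm e := by
    by_contra! hlt
    have hlt' : (m : ℚ) < i j.castSucc := by exact_mod_cast hlt
    rcases Fin.eq_zero_or_eq_succ j.castSucc with hj | ⟨k, hk⟩
    · exact (hj ▸ hlt).not_ge (hN.first ▸ natTrailingDegree_le_of_mem_supp m hm)
    · have hkj : k < j := by rw [← Fin.succ_le_castSucc_iff, hk]
      have hright := hN.right_eq k
      rw [← hk] at hright
      nlinarith [hN.line_le_height k hm, hN.slope_mono hkj]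
  le_right m hm e := by
    by_contra! hlt
    have hlt' : (i j.succ : ℚ) < m := by exact_mod_cast hlt
    rcases Fin.eq_castSucc_or_eq_last j.succ with ⟨k, hk⟩ | hj
    · have hjk : j < k := by rw [← Fin.succ_le_castSucc_iff, hk]
      have hline := hN.line_le_height k hm
      rw [← hk] at hline
      nlinarith [hN.right_eq j, hN.slope_mono hjk]
    · exact (hj ▸ hlt).not_ge (hN.last ▸ le_natDegree_of_mem_supp m hm)

lemma exists_edge_of_isFace (hN : IsNPVertices S f s i c) {σ w : ℚ} {a b : ℕ}
    (H : IsFace f.support (height S f) σ w a b) (hab : a < b) :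
    ∃ j : Fin s, NPslope i c j = σ ∧ i j.castSucc = a ∧ i j.succ = b := by
  obtain ⟨j, hj⟩ : ∃ j : Fin s, a ∈ Set.Ico (i j.castSucc) (i j.succ) := by
    by_contra! hj
    have hle : ∀ k, i k ≤ a := Fin.induction
      (hN.first ▸ natTrailingDegree_le_of_mem_supp a H.left_mem)
      fun k hk => not_lt.mp fun hlt => hj k ⟨hk, hlt⟩
    exact hab.not_ge ((hN.last ▸ le_natDegree_of_mem_supp b H.right_mem).trans (hle (Fin.last s)))
  obtain rfl := H.slope_eq_of_mem_Ico (hN.isFace j) hab hj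
  exact ⟨j, rfl, (hN.isFace j).unique H⟩

theorem newtonSlopes_eq (hN : IsNPVertices S f s i c) :
    newtonSlopes S f = Set.range (NPslope i c) := by
  ext σ
  constructor
  · rintro ⟨w, a, b, H, hab⟩
    obtain ⟨j, hj, -⟩ := hN.exists_edge_of_isFace H hab
    exact ⟨j, hj⟩
  · rintro ⟨j, rfl⟩
    exact ⟨_, _, _, hN.isFace j, hN.mono Fin.castSucc_lt_succ⟩

lemma newtonSlopes_eq_singleton {d : ℕ} {ρ : ℚ} (hN : IsNPVertices S f 1 ![0, d] ![-ρ * d, 0]) :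
    newtonSlopes S f = {ρ} := by
  have hd : (d : ℚ) ≠ 0 := by simpa using (hN.edge_pos 0).ne'
  rw [hN.newtonSlopes_eq, Set.range_unique]
  simp [NPslope, hd]

lemma of_isFace (hf : f ≠ 0) (hi : StrictMono i) (hfirst : i 0 = f.natTrailingDegree)
    (hlast : i (Fin.last s) = f.natDegree)
    (hface : ∀ j : Fin s, ∃ σ w, IsFace f.support (height S f) σ w (i j.castSucc) (i j.succ)) :
    IsNPVertices S f s i (height S f ∘ i) := by
  choose σ w H using hface
  have hpos (j : Fin s) : (0 : ℚ) < i j.succ - i j.castSucc :=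
    sub_pos.mpr (by exact_mod_cast hi Fin.castSucc_lt_succ)
  have hslope : NPslope i (height S f ∘ i) = σ := by
    funext j
    rw [NPslope, div_eq_iff (hpos j).ne']
    simp only [Function.comp_apply, (H j).left_eq, (H j).right_eq]
    ring
  refine ⟨hi, hfirst, hlast, fun j => vK_coeff_eq_coe_iff.mpr ⟨?_, rfl⟩, ?_, fun j m q hq => ?_⟩
  · cases j using Fin.cases with
    | zero => exact hfirst ▸ natTrailingDegree_mem_support_of_nonzero hf
    | succ j => exact (H j).right_mem
  · rw [hslope]
    exact fun j k hjk => (H j).slope_lt_of_right_lt (H k) (hi (Fin.succ_lt_succ_iff.mpr hjk))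
  · obtain ⟨hm, rfl⟩ := vK_coeff_eq_coe_iff.mp hq
    simp only [Function.comp_apply, (H j).left_eq, (H j).right_eq]
    nlinarith [(H j).le m hm, hpos j]

end IsNPVertices

lemma exists_isNPVertices (S : Setup K Kbar) (hf : f ≠ 0) :
    ∃ (s : ℕ) (i : Fin (s + 1) → ℕ) (c : Fin (s + 1) → ℚ), IsNPVertices S f s i c := by
  obtain ⟨s, i, hi, hfirst, hlast, hface⟩ :=
    IsFace.exists_vertices f.support (height S f) (nonempty_support_iff.mpr hf)
  rw [← natTrailingDegree_eq_support_min' hf] at hfirst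
  rw [← natDegree_eq_support_max' hf] at hlast
  exact ⟨s, i, _, .of_isFace hf hi hfirst hlast hface⟩

theorem npRegular_iff_isFace (hf : f ≠ 0) :
    NPRegular S π f ↔ ∀ (σ w : ℚ) (a b : ℕ) (q : ℤ), IsFace f.support (height S f) σ w a b →
      a < b → (q : ℚ) = height S f a → (redEdge S π f a b q σ.num σ.den).Separable := by
  constructor
  · intro hreg σ w a b q H hab hq
    obtain ⟨s, i, c, hN⟩ := exists_isNPVertices S hf
    obtain ⟨j, rfl, rfl, rfl⟩ := hN.exists_edge_of_isFace H hab
    exact hreg s i c hN j q _ _ (hq.trans (hN.height_eq _)) rfl (Rat.den_mul_eq_num _).symm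
  · rintro h s i c hN j q nρ n hq rfl hnρ
    obtain rfl : nρ = (NPslope i c j).num := by
      rw [Rat.den_mul_eq_num] at hnρ
      exact_mod_cast hnρ
    exact h _ _ _ _ q (hN.isFace j) (hN.mono Fin.castSucc_lt_succ) (hq.trans (hN.height_eq _).symm)

end NewtonPolygon

section Residue

variable {S : Setup K Kbar}

lemma mem_intRing_iff_ord_nonneg {x : Kbar} : x ∈ intRing S ↔ 0 ≤ S.ord x := by
  rcases eq_or_ne x 0 with rfl | hx
  · simp [ord_zero, zero_mem]
  · rw [mem_intRing, ← coe_ord hx]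
    norm_cast

lemma mk_ne_zero_iff {x : intRing S} :
    Ideal.Quotient.mk (maxIdeal S) x ≠ 0 ↔ (x : Kbar) ≠ 0 ∧ S.ord x = 0 := by
  rw [Ne, Ideal.Quotient.eq_zero_iff_mem, ← v_eq_coe_iff]
  exact not_lt.trans ⟨fun h => h.antisymm (mem_intRing.mp x.2), fun h => h.le⟩

instance isMaximal_maxIdeal : (maxIdeal S).IsMaximal := by
  refine Ideal.isMaximal_iff.mpr ⟨fun h => ?_, fun J x _ hx hxJ => ?_⟩
  · exact mk_ne_zero_iff.mpr ⟨one_ne_zero, ord_one S⟩ (Ideal.Quotient.eq_zero_iff_mem.mpr h)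
  · obtain ⟨hx0, hx⟩ := mk_ne_zero_iff.mp (mt Ideal.Quotient.eq_zero_iff_mem.mp hx)
    have hinv : (x : Kbar)⁻¹ ∈ intRing S := by
      rw [mem_intRing_iff_ord_nonneg, ord_inv, hx, neg_zero]
    convert J.mul_mem_left ⟨_, hinv⟩ hxJ
    exact Subtype.ext (inv_mul_cancel₀ hx0).symm

lemma isUnit_residue {x : Residue S} (hx : x ≠ 0) : IsUnit x :=
  letI := Ideal.Quotient.field (maxIdeal S)
  hx.isUnit

lemma mk_mul_red {u y : intRing S} (hu : Ideal.Quotient.mk (maxIdeal S) u ≠ 0) {x : Kbar}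
    (h : u * x = y) :
    Ideal.Quotient.mk (maxIdeal S) u * red S x = Ideal.Quotient.mk (maxIdeal S) y := by
  have hx : 0 ≤ S.v x := by
    have hy := y.2
    rwa [mem_intRing, ← h, S.v_mul, v_eq_coe_iff.mpr (mk_ne_zero_iff.mp hu), WithTop.coe_zero,
      zero_add] at hy
  rw [red, dif_pos hx, ← map_mul]
  exact congrArg _ (Subtype.ext h)

end Residue

section Reduction

variable {S : Setup K Kbar} {p p' : Kbar[X]} {P P' : (Residue S)[X]}

/-- `P` is a nonzero reduction of `p`: it is obtained by scaling `p` by a constant so that its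
coefficients become integral, but not all in the maximal ideal, and then reducing the
coefficients. It is determined by `p` up to a unit. -/
def IsReduction (S : Setup K Kbar) (p : Kbar[X]) (P : (Residue S)[X]) : Prop :=
  P ≠ 0 ∧ ∃ (e : Kbar) (F : (intRing S)[X]),
    F.map (intRing S).subtype = C e * p ∧ F.map (Ideal.Quotient.mk (maxIdeal S)) = P

namespace IsReduction

lemma mul (h : IsReduction S p P) (h' : IsReduction S p' P') :
    IsReduction S (p * p') (P * P') := by
  obtain ⟨hP, e, F, hF, rfl⟩ := h
  obtain ⟨hP', e', F', hF', rfl⟩ := h'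
  refine ⟨mul_ne_zero hP hP', e * e', F * F', ?_, Polynomial.map_mul _⟩
  rw [Polynomial.map_mul, hF, hF', C_mul, mul_mul_mul_comm]

lemma C_one {e : Kbar} (he : e ≠ 0) : IsReduction S (C e) 1 :=
  ⟨one_ne_zero, e⁻¹, 1, by rw [Polynomial.map_one, ← C_mul, inv_mul_cancel₀ he, C_1],
    Polynomial.map_one _⟩

lemma exists_coeff_ne_zero_iff (h : IsReduction S p P) :
    ∃ w : ℚ, (∀ m ∈ p.support, w ≤ S.ord (p.coeff m)) ∧
      ∀ m, P.coeff m ≠ 0 ↔ m ∈ p.support ∧ S.ord (p.coeff m) = w := by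
  obtain ⟨hP, e, F, hF, rfl⟩ := h
  have hcoeff (m : ℕ) : (F.coeff m : Kbar) = e * p.coeff m := by
    simpa using congrArg (coeff · m) hF
  have he : e ≠ 0 := by
    rintro rfl
    refine hP (ext fun m => ?_)
    have hm : F.coeff m = 0 := Subtype.ext (by simpa using hcoeff m)
    rw [coeff_map, hm, map_zero, coeff_zero]
  have hord {m : ℕ} (hm : m ∈ p.support) : S.ord (F.coeff m) = S.ord e + S.ord (p.coeff m) := by
    rw [hcoeff, ord_mul he (mem_support_iff.mp hm)]
  refine ⟨-S.ord e, fun m hm => ?_, fun m => ?_⟩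
  · linarith [hord hm, mem_intRing_iff_ord_nonneg.mp (F.coeff m).2]
  · rw [coeff_map, mk_ne_zero_iff, hcoeff, mul_ne_zero_iff_left he, ← mem_support_iff]
    refine and_congr_right fun hm => ?_
    rw [← hcoeff, hord hm, eq_neg_iff_add_eq_zero, add_comm]

end IsReduction

lemma exists_isReduction (S : Setup K Kbar) (hp : p ≠ 0) : ∃ P, IsReduction S p P := by
  obtain ⟨m₀, hm₀, hmin⟩ := p.support.exists_min_image (fun m => S.ord (p.coeff m))
    (nonempty_support_iff.mpr hp)
  rw [mem_support_iff] at hm₀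
  have hint (m : ℕ) : (p.coeff m₀)⁻¹ * p.coeff m ∈ intRing S := by
    by_cases hm : p.coeff m = 0
    · simp [hm, zero_mem]
    · rw [mem_intRing_iff_ord_nonneg, ord_mul (inv_ne_zero hm₀) hm, ord_inv]
      linarith [hmin m (mem_support_iff.mpr hm)]
  obtain ⟨F, hF⟩ : ∃ F : (intRing S)[X], F.map (intRing S).subtype = C (p.coeff m₀)⁻¹ * p :=
    (mem_lifts _).mp <| (lifts_iff_coeff_lifts _).mpr fun m => ⟨⟨_, hint m⟩, (coeff_C_mul _).symm⟩
  refine ⟨_, fun h0 => ?_, _, F, hF, rfl⟩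
  have hone : F.coeff m₀ = 1 := Subtype.ext (by
    simpa [inv_mul_cancel₀ hm₀] using congrArg (coeff · m₀) hF)
  simpa [hone] using congrArg (coeff · m₀) h0

end Reduction

section Rescale

variable {S : Setup K Kbar} {f : K[X]} {t : Kbar} {P : (Residue S)[X]}

/-- The substitution `f(x) ↦ f(x / t)`, which turns points of slope `v(t)` in the Newton polygon
into points of slope `0`. -/
noncomputable def rescale (t : Kbar) : K[X] →+* Kbar[X] :=
  (compRingHom (C t⁻¹ * X)).comp (mapRingHom (algebraMap K Kbar))

lemma coeff_rescale (t : Kbar) (f : K[X]) (m : ℕ) :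
    (rescale t f).coeff m = algebraMap K Kbar (f.coeff m) * t⁻¹ ^ m := by
  simp [rescale, comp_C_mul_X_coeff]

lemma coeff_rescale_eq_mul_zpow {x : Kbar} {n : ℕ} {ν : ℤ} (hx : x ≠ 0) (ht : t ^ n = x ^ ν)
    (a j : ℕ) (q : ℤ) :
    (rescale t f).coeff (n * j + a) =
      t⁻¹ ^ a * x ^ q * (algebraMap K Kbar (f.coeff (n * j + a)) * x ^ (-(q + j * ν))) := by
  have htj : t⁻¹ ^ (n * j) = x ^ (-(j * ν)) := by
    rw [inv_pow, pow_mul, ht, ← zpow_natCast, ← zpow_mul, ← zpow_neg, mul_comm]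
  have hq : x ^ q * x ^ (-q) = 1 := by rw [← zpow_add₀ hx, add_neg_cancel, zpow_zero]
  rw [coeff_rescale, pow_add, htj, neg_add, zpow_add₀ hx]
  linear_combination
    (-(algebraMap K Kbar (f.coeff (n * j + a)) * x ^ (-(j * ν)) * t⁻¹ ^ a)) * hq

lemma rescale_C (t : Kbar) (u : K) : rescale t (C u) = C (algebraMap K Kbar u) := by
  simp [rescale]

lemma support_rescale (ht : t ≠ 0) (f : K[X]) : (rescale t f).support = f.support := by
  ext m
  simp [coeff_rescale, ht]

lemma ord_coeff_rescale (ht : t ≠ 0) {m : ℕ} (hm : m ∈ f.support) :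
    S.ord ((rescale t f).coeff m) = height S f m - S.ord t * m := by
  have hm0 : algebraMap K Kbar (f.coeff m) ≠ 0 := by simpa using hm
  rw [coeff_rescale, ord_mul hm0 (pow_ne_zero m (inv_ne_zero ht)), ord_pow, ord_inv, height]
  ring

lemma IsReduction.exists_coeff_rescale (h : IsReduction S (rescale t f) P) (ht : t ≠ 0) :
    ∃ w : ℚ, (∀ m ∈ f.support, w + S.ord t * m ≤ height S f m) ∧
      ∀ m, P.coeff m ≠ 0 ↔ m ∈ f.support ∧ height S f m = w + S.ord t * m := by
  obtain ⟨w, hle, hiff⟩ := h.exists_coeff_ne_zero_iff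
  simp only [support_rescale ht] at hle hiff
  refine ⟨w, fun m hm => ?_, fun m => (hiff m).trans (and_congr_right fun hm => ?_)⟩
  · linarith [hle m hm, ord_coeff_rescale (S := S) ht hm]
  · rw [ord_coeff_rescale ht hm, sub_eq_iff_eq_add]

lemma IsReduction.exists_isFace (h : IsReduction S (rescale t f) P) (ht : t ≠ 0) :
    ∃ w, IsFace f.support (height S f) (S.ord t) w P.natTrailingDegree P.natDegree := by
  obtain ⟨w, hle, hiff⟩ := h.exists_coeff_rescale ht
  obtain ⟨ha, ha'⟩ := (hiff _).mp (mt trailingCoeff_eq_zero.mp h.1)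
  obtain ⟨hb, hb'⟩ := (hiff _).mp (mt leadingCoeff_eq_zero.mp h.1)
  exact ⟨w, ha, hb, ha', hb', hle,
    fun m hm e => natTrailingDegree_le_of_ne_zero ((hiff m).mpr ⟨hm, e⟩),
    fun m hm e => le_natDegree_of_ne_zero ((hiff m).mpr ⟨hm, e⟩)⟩

end Rescale

lemma exists_eq_X_pow_mul_expand {R : Type*} [CommRing R] {n : ℕ} (hn : n ≠ 0) {P : R[X]}
    (hP : P ≠ 0) (hdvd : ∀ m, P.coeff m ≠ 0 → n ∣ m - P.natTrailingDegree) :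
    ∃ Q : R[X], Q.coeff 0 ≠ 0 ∧ P = X ^ P.natTrailingDegree * expand R n Q := by
  set a := P.natTrailingDegree
  obtain ⟨Q, hQ⟩ : X ^ a ∣ P :=
    X_pow_dvd_iff.mpr fun m hm => coeff_eq_zero_of_lt_natTrailingDegree hm
  have hcoeff (m : ℕ) : P.coeff (m + a) = Q.coeff m := by rw [hQ, coeff_X_pow_mul]
  refine ⟨contract n Q, ?_, ?_⟩
  · rw [coeff_contract hn, zero_mul, ← hcoeff, zero_add]
    exact mt trailingCoeff_eq_zero.mp hP
  · rw [hQ]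
    congr 1
    ext m
    rw [coeff_expand hn.bot_lt]
    split_ifs with hm
    · rw [coeff_contract hn, Nat.div_mul_cancel hm]
    · by_contra h0
      exact hm (by simpa using hdvd (m + a) (hcoeff m ▸ h0))

lemma den_dvd_of_mul_eq_intCast {σ : ℚ} {k : ℕ} {z : ℤ} (h : σ * k = z) : σ.den ∣ k := by
  have hmul : σ.num * k = z * σ.den := by
    have : (σ.num : ℚ) * k = z * σ.den := by rw [← h, ← σ.mul_den_eq_num]; ring
    exact_mod_cast this
  have hdvd : (σ.den : ℤ) ∣ σ.num * k := hmul ▸ dvd_mul_left _ _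
  have hcop : IsCoprime (σ.den : ℤ) σ.num := by
    simpa [Int.isCoprime_iff_nat_coprime] using σ.reduced.symm
  exact Int.natCast_dvd_natCast.mp (hcop.dvd_of_dvd_mul_left hdvd)

section Residual

variable {S : Setup K Kbar} {π : K} {f g : K[X]} {t : Kbar} {σ : ℚ} {n a b : ℕ}
  {R R' : (Residue S)[X]}

/-- `R` is the residual polynomial of `f` with respect to the scaling `x ↦ x / t` and the step `n`:
the reduction of `f(x / t)` is `x^a R(x^n)`, and `R(0) ≠ 0`. If `n` is the denominator of `v(t)`,
then `R` is a constant or, up to a unit, the reduction of `f` along the edge of slope `v(t)` of its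
Newton polygon. -/
structure IsResidual (S : Setup K Kbar) (t : Kbar) (n : ℕ) (f : K[X]) (a : ℕ)
    (R : (Residue S)[X]) : Prop where
  coeff_zero_ne_zero : R.coeff 0 ≠ 0
  isReduction : IsReduction S (rescale t f) (X ^ a * expand (Residue S) n R)

namespace IsResidual

lemma mul (h : IsResidual S t n f a R) (h' : IsResidual S t n g b R') :
    IsResidual S t n (f * g) (a + b) (R * R') where
  coeff_zero_ne_zero := by
    rw [mul_coeff_zero]
    exact mul_ne_zero h.coeff_zero_ne_zero h'.coeff_zero_ne_zero
  isReduction := by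
    rw [map_mul, map_mul, pow_add, mul_mul_mul_comm]
    exact h.isReduction.mul h'.isReduction

lemma C_one (S : Setup K Kbar) (t : Kbar) (n : ℕ) {u : K} (hu : u ≠ 0) :
    IsResidual S t n (C u) 0 1 where
  coeff_zero_ne_zero := by simp
  isReduction := by
    rw [rescale_C, map_one, pow_zero, mul_one]
    exact .C_one ((_root_.map_ne_zero _).mpr hu)

lemma prod {ι : Type*} {T : Finset ι} {g : ι → K[X]} {a : ι → ℕ} {R : ι → (Residue S)[X]}
    (h : ∀ j ∈ T, IsResidual S t n (g j) (a j) (R j)) :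
    IsResidual S t n (∏ j ∈ T, g j) (∑ j ∈ T, a j) (∏ j ∈ T, R j) := by
  induction T using Finset.induction_on with
  | empty => simpa using C_one S t n one_ne_zero
  | insert j T hj ih =>
    rw [Finset.prod_insert hj, Finset.sum_insert hj, Finset.prod_insert hj]
    exact (h j (T.mem_insert_self j)).mul (ih fun k hk => h k (Finset.mem_insert_of_mem hk))

lemma exists_isFace (h : IsResidual S t n f a R) (ht : S.v t = σ) (hn : n ≠ 0) :
    ∃ w, IsFace f.support (height S f) σ w a (a + R.natDegree * n) := by
  obtain ⟨ht0, rfl⟩ := v_eq_coe_iff.mp ht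
  have hR : R ≠ 0 := fun h0 => h.coeff_zero_ne_zero (by simp [h0])
  have hexp : expand (Residue S) n R ≠ 0 := (expand_ne_zero hn.bot_lt).mpr hR
  have hexp0 : (expand (Residue S) n R).natTrailingDegree = 0 :=
    natTrailingDegree_eq_zero.mpr <| .inr <| by
      simpa [coeff_expand hn.bot_lt] using h.coeff_zero_ne_zero
  have hX : (X ^ a : (Residue S)[X]) ≠ 0 := pow_ne_zero a X_ne_zero
  simpa only [natTrailingDegree_mul hX hexp, natDegree_mul hX hexp, natTrailingDegree_X_pow,
    natDegree_X_pow, natDegree_expand, hexp0, add_zero] using h.isReduction.exists_isFace ht0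

lemma isUnit_of_natDegree_eq_zero (h : IsResidual S t n f a R) (hR : R.natDegree = 0) :
    IsUnit R := by
  rw [eq_C_of_natDegree_eq_zero hR]
  exact (isUnit_residue h.coeff_zero_ne_zero).map C

lemma isUnit_or_mem_newtonSlopes (h : IsResidual S t n f a R) (ht : S.v t = σ) (hn : n ≠ 0) :
    IsUnit R ∨ σ ∈ newtonSlopes S f := by
  rcases Nat.eq_zero_or_pos R.natDegree with hdeg | hdeg
  · exact .inl (h.isUnit_of_natDegree_eq_zero hdeg)
  · obtain ⟨w, H⟩ := h.exists_isFace ht hn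
    exact .inr ⟨w, _, _, H, Nat.lt_add_of_pos_right (Nat.mul_pos hdeg hn.bot_lt)⟩

lemma isCoprime (h : IsResidual S t n f a R) (h' : IsResidual S t n g b R') (ht : S.v t = σ)
    (hn : n ≠ 0) (hdisj : Disjoint (newtonSlopes S f) (newtonSlopes S g)) : IsCoprime R R' := by
  rcases h.isUnit_or_mem_newtonSlopes ht hn with hR | hσ
  · exact isCoprime_one_left.of_isCoprime_of_dvd_left hR.dvd
  rcases h'.isUnit_or_mem_newtonSlopes ht hn with hR' | hσ'
  · exact isCoprime_one_right.of_isCoprime_of_dvd_right hR'.dvd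
  · exact absurd hσ' (Set.disjoint_left.mp hdisj hσ)

-- The unit `κ` is the reduction of `e t⁻ᵃ π^q`, where `e` is the constant by which `f(x / t)` is
-- scaled before it is reduced.
lemma exists_isUnit_C_mul_redEdge (h : IsResidual S t n f a R) (hπ : S.vK π = (1 : ℚ))
    {ν q : ℤ} (hn : n ≠ 0) (ht : t ^ n = algebraMap K Kbar π ^ ν) (hq : (q : ℚ) = height S f a) :
    ∃ κ, IsUnit κ ∧ C κ * redEdge S π f a (a + R.natDegree * n) q ν n = R := by
  obtain ⟨hR0, -, e, F, hF, hFR⟩ := h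
  obtain ⟨hπ0, hπ1⟩ := v_eq_coe_iff.mp hπ
  have hR (j : ℕ) : Ideal.Quotient.mk (maxIdeal S) (F.coeff (n * j + a)) = R.coeff j := by
    rw [← coeff_map, hFR, coeff_X_pow_mul, coeff_expand_mul' hn.bot_lt]
  let γ : Kbar := e * (t⁻¹ ^ a * algebraMap K Kbar π ^ q)
  have hγF (j : ℕ) : γ * (algebraMap K Kbar (f.coeff (n * j + a)) *
      algebraMap K Kbar π ^ (-(q + j * ν))) = F.coeff (n * j + a) := by
    rw [mul_assoc, ← coeff_rescale_eq_mul_zpow hπ0 ht, ← coeff_C_mul, ← hF, coeff_map,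
      Subring.subtype_apply]
  obtain ⟨hFa, hFa'⟩ : (F.coeff a : Kbar) ≠ 0 ∧ S.ord (F.coeff a) = 0 :=
    mk_ne_zero_iff.mp (by simpa [← hR] using hR0)
  have hγa : γ * (algebraMap K Kbar (f.coeff a) * algebraMap K Kbar π ^ (-q)) = F.coeff a := by
    simpa using hγF 0
  have hγ0 : γ ≠ 0 := left_ne_zero_of_mul (hγa ▸ hFa)
  have hγ1 : S.ord γ = 0 := by
    have hfa := left_ne_zero_of_mul (right_ne_zero_of_mul (hγa ▸ hFa))
    rw [← hγa, ord_mul hγ0 (mul_ne_zero hfa (zpow_ne_zero _ hπ0)),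
      ord_mul hfa (zpow_ne_zero _ hπ0), ord_zpow, hπ1, ← height, ← hq] at hFa'
    push_cast at hFa'
    linarith
  have hγ := mk_ne_zero_iff (x := ⟨γ, mem_intRing_iff_ord_nonneg.mpr hγ1.ge⟩).mpr ⟨hγ0, hγ1⟩
  refine ⟨_, isUnit_residue hγ, ?_⟩
  nth_rw 2 [R.as_sum_range_C_mul_X_pow]
  rw [redEdge, Finset.mul_sum, Nat.add_sub_cancel_left, Nat.mul_div_cancel _ hn.bot_lt]
  refine Finset.sum_congr rfl fun j _ => ?_
  rw [← mul_assoc, ← C_mul, mk_mul_red hγ (hγF j), hR]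

end IsResidual

lemma exists_isResidual (hf : f ≠ 0) (ht : S.v t = σ) : ∃ a R, IsResidual S t σ.den f a R := by
  obtain ⟨ht0, rfl⟩ := v_eq_coe_iff.mp ht
  have hresc : rescale t f ≠ 0 := by
    rwa [← support_nonempty, support_rescale ht0, support_nonempty]
  obtain ⟨P, hP⟩ := exists_isReduction S hresc
  obtain ⟨w, -, hiff⟩ := hP.exists_coeff_rescale ht0
  obtain ⟨ha, ha_eq⟩ := (hiff _).mp (mt trailingCoeff_eq_zero.mp hP.1)
  obtain ⟨z₀, hz₀⟩ := exists_height_eq_intCast (S := S) ha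
  have hdvd (m : ℕ) (hm : P.coeff m ≠ 0) : (S.ord t).den ∣ m - P.natTrailingDegree := by
    obtain ⟨hmf, hm_eq⟩ := (hiff m).mp hm
    obtain ⟨z, hz⟩ := exists_height_eq_intCast (S := S) hmf
    refine den_dvd_of_mul_eq_intCast (z := z - z₀) ?_
    rw [Nat.cast_sub (natTrailingDegree_le_of_ne_zero hm)]
    push_cast
    linarith
  obtain ⟨R, hR0, hPR⟩ := exists_eq_X_pow_mul_expand (S.ord t).den_nz hP.1 hdvd
  exact ⟨_, R, hR0, hPR ▸ hP⟩

end Residual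

section NPRegular

variable {S : Setup K Kbar} {π : K} {f g : K[X]}

lemma NPRegular.separable_of_isResidual (hreg : NPRegular S π f) (hf : f ≠ 0)
    (hπ : S.vK π = (1 : ℚ)) {σ : ℚ} {t : Kbar} (ht : t ^ σ.den = algebraMap K Kbar π ^ σ.num)
    {a : ℕ} {R : (Residue S)[X]} (hR : IsResidual S t σ.den f a R) : R.Separable := by
  rcases Nat.eq_zero_or_pos R.natDegree with hdeg | hdeg
  · exact separable_one.of_dvd (hR.isUnit_of_natDegree_eq_zero hdeg).dvd
  · obtain ⟨w, H⟩ := hR.exists_isFace (v_eq_of_pow_den_eq_zpow_num hπ ht) σ.den_nz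
    obtain ⟨q, hq⟩ := exists_height_eq_intCast (S := S) H.left_mem
    obtain ⟨κ, hκ, hκR⟩ := hR.exists_isUnit_C_mul_redEdge hπ σ.den_nz ht hq
    rw [← hκR]
    exact ((npRegular_iff_isFace hf).mp hreg σ w _ _ q H
      (Nat.lt_add_of_pos_right (Nat.mul_pos hdeg σ.den_pos)) hq).unit_mul (isUnit_C.mpr hκ)

theorem npRegular_iff_isResidual (hf : f ≠ 0) (hπ : S.vK π = (1 : ℚ)) :
    NPRegular S π f ↔ ∀ (σ : ℚ) (t : Kbar), t ^ σ.den = algebraMap K Kbar π ^ σ.num →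
      ∃ a R, IsResidual S t σ.den f a R ∧ R.Separable := by
  constructor
  · intro hreg σ t ht
    obtain ⟨a, R, hR⟩ := exists_isResidual hf (v_eq_of_pow_den_eq_zpow_num hπ ht)
    exact ⟨a, R, hR, hreg.separable_of_isResidual hf hπ ht hR⟩
  · refine fun h => (npRegular_iff_isFace hf).mpr fun σ w a b q H _ hq => ?_
    obtain ⟨t, ht⟩ := exists_pow_den_eq_zpow_num S (algebraMap K Kbar π) σ
    obtain ⟨a', R, hR, hsep⟩ := h σ t ht
    obtain ⟨w', H'⟩ := hR.exists_isFace (v_eq_of_pow_den_eq_zpow_num hπ ht) σ.den_nz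
    obtain ⟨rfl, rfl⟩ := H.unique H'
    obtain ⟨κ, -, hκR⟩ := hR.exists_isUnit_C_mul_redEdge hπ σ.den_nz ht hq
    exact Separable.of_mul_right (hκR.symm ▸ hsep)

theorem NPRegular.of_dvd (hreg : NPRegular S π f) (hf : f ≠ 0) (hπ : S.vK π = (1 : ℚ))
    (hgf : g ∣ f) : NPRegular S π g := by
  obtain ⟨g', rfl⟩ := hgf
  obtain ⟨hg, hg'⟩ := mul_ne_zero_iff.mp hf
  refine (npRegular_iff_isResidual hg hπ).mpr fun σ t ht => ?_
  obtain ⟨a, R, hR⟩ := exists_isResidual hg (v_eq_of_pow_den_eq_zpow_num hπ ht)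
  obtain ⟨a', R', hR'⟩ := exists_isResidual hg' (v_eq_of_pow_den_eq_zpow_num hπ ht)
  exact ⟨a, R, hR, (hreg.separable_of_isResidual hf hπ ht (hR.mul hR')).of_mul_left⟩

end NPRegular

theorem npRegular_iff_factors_npRegular_general (S : Setup K Kbar) (π : K)
    (hπ : S.vK π = ((1 : ℚ) : WithTop ℚ)) {ι : Type*} (T : Finset ι) {u : K} (hu : u ≠ 0)
    {g : ι → K[X]} (hg : ∀ j ∈ T, g j ≠ 0)
    (hslope : (T : Set ι).PairwiseDisjoint fun j => newtonSlopes S (g j)) :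
    NPRegular S π (C u * ∏ j ∈ T, g j) ↔ ∀ j ∈ T, NPRegular S π (g j) := by
  have hf : C u * ∏ j ∈ T, g j ≠ 0 :=
    mul_ne_zero (C_ne_zero.mpr hu) (Finset.prod_ne_zero_iff.mpr hg)
  constructor
  · intro h j hj
    exact h.of_dvd hf hπ ((Finset.dvd_prod_of_mem g hj).mul_left _)
  · refine fun h => (npRegular_iff_isResidual hf hπ).mpr fun σ t ht => ?_
    choose! a R hR hsep using fun j hj => (npRegular_iff_isResidual (hg j hj) hπ).mp (h j hj) σ t ht
    refine ⟨_, _, (IsResidual.C_one S t σ.den hu).mul (.prod hR), ?_⟩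
    rw [one_mul]
    refine separable_prod' (fun j hj k hk hjk => ?_) hsep
    exact (hR j hj).isCoprime (hR k hk) (v_eq_of_pow_den_eq_zpow_num hπ ht) σ.den_nz
      (hslope hj hk hjk)

/-- **NP-regularity and the Newton polygon factorisation.** Suppose `f(0) ≠ 0` and
`f = c·g_1⋯g_s` is the Newton polygon factorisation (each `g_j` monic whose Newton polygon
is a single edge of slope `ρ_j`, with `ρ_1 < … < ρ_s` the slopes of the edges of `NP(f)`).
Then `f` is NP-regular iff every `g_j` is NP-regular. -/
theorem npRegular_iff_factors_npRegular
    (S : Setup K Kbar) (π : K) (hπ : S.vK π = ((1 : ℚ) : WithTop ℚ))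
    (f : K[X]) (h0 : f.coeff 0 ≠ 0)
    (s : ℕ) (u : K) (hu : u ≠ 0) (g : Fin s → K[X])
    (hfact : f = Polynomial.C u * ∏ j, g j)
    (hmonic : ∀ j, (g j).Monic)
    (ρ : Fin s → ℚ) (hρmono : StrictMono ρ)
    (hedge : ∀ j, IsNPVertices S (g j) 1 ![0, (g j).natDegree]
      ![-(ρ j) * ((g j).natDegree : ℚ), 0]) :
    NPRegular S π f ↔ ∀ j, NPRegular S π (g j) := by
  have hslope : ((Finset.univ : Finset (Fin s)) : Set (Fin s)).PairwiseDisjoint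
      fun j => newtonSlopes S (g j) := fun j _ k _ hjk => by
    simpa [(hedge _).newtonSlopes_eq_singleton] using hρmono.injective.ne hjk
  rw [hfact, npRegular_iff_factors_npRegular_general S π hπ Finset.univ hu
    (fun j _ => (hmonic j).ne_zero) hslope]
  simp

end ClusterPicture
end

section
/- Let s be a proper cluster of f with rational centre w_s, and let t be a cluster with t ⊇ s. Then w_s is a rational centre of t and ρ_t ≤ ρ_s. If moreover s is a rational cluster and t ⊋ s, then ρ_t < ρ_s. -/
open Polynomial
open scoped Classical

namespace ClusterPicture

variable {K Kbar : Type*} [Field K] [Field Kbar] [Algebra K Kbar]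

/- Let `s ⊆ t` with `s` nonempty, and fix `r ∈ s`. Writing `x - z = (x - w) - (r - w) + (r - z)` for
`x ∈ t`, the ultrametric inequality gives `min (min_t v(· - w)) (min_s v(· - z)) ≤ min_t v(· - z)`.
If `z` is an optimal centre of `s`, then `min_t v(· - w) ≤ min_s v(· - w) ≤ min_s v(· - z)`, so the
left side is `min_t v(· - w)` and `z` is optimal for `t`. If `s` is cut out of `t` by a disc of
radius `δ` about a rational `z`, and `w` is an optimal centre, then `δ ≤ min_s v(· - z) ≤ ρ_s`, so
`ρ_s ≤ ρ_t = min_t v(· - w)` would give `δ ≤ min_t v(· - z)`, that is `t ⊆ s`. -/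

section Valuation

variable {L Γ₀ : Type*} [Ring L] [LinearOrderedAddCommMonoidWithTop Γ₀] (v : AddValuation L Γ₀)

/-- `min_{r ∈ s} v (r - z)`, the analogue of `dmin` for an arbitrary additive valuation: the radius
of the smallest disc about `z` that contains `s`. It is `⊤` if `s` is empty. -/
def minVal (s : Finset L) (z : L) : Γ₀ := s.inf fun r => v (r - z)

variable {s t : Finset L} {z w : L} {C : Set L}

lemma minVal_anti (hst : s ⊆ t) (z : L) : minVal v t z ≤ minVal v s z :=
  Finset.inf_mono hst

lemma min_minVal_le_minVal (hs : s.Nonempty) (hst : s ⊆ t) (w z : L) :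
    min (minVal v t w) (minVal v s z) ≤ minVal v t z := by
  obtain ⟨r, hr⟩ := hs
  refine Finset.le_inf fun x hx => ?_
  have hxw : minVal v t w ≤ v (x - w) := Finset.inf_le hx
  have hrw : minVal v t w ≤ v (r - w) := Finset.inf_le (hst hr)
  have hrz : minVal v s z ≤ v (r - z) := Finset.inf_le hr
  have hxr : minVal v t w ≤ v (x - r) := by
    simpa only [sub_sub_sub_cancel_right] using v.map_le_sub hxw hrw
  simpa only [sub_add_sub_cancel] using
    v.map_le_add (min_le_of_left_le hxr) (min_le_of_right_le hrz)

lemma isMaxOn_minVal_of_subset (hs : s.Nonempty) (hst : s ⊆ t)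
    (hw : IsMaxOn (minVal v s) C w) : IsMaxOn (minVal v t) C w := fun w' hw' =>
  have hle : minVal v t w' ≤ minVal v s w := (minVal_anti v hst w').trans (hw hw')
  (le_min le_rfl hle).trans (min_minVal_le_minVal v hs hst w' w)

lemma minVal_lt_minVal_of_ssubset {δ : Γ₀} (hs : s.Nonempty) (hst : s ⊂ t)
    (hdisc : ∀ x ∈ t, x ∈ s ↔ δ ≤ v (x - z)) (hzw : minVal v s z ≤ minVal v s w) :
    minVal v t w < minVal v s w := by
  have hδs : δ ≤ minVal v s z := Finset.le_inf fun x hx => (hdisc x (hst.subset hx)).1 hx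
  by_contra! hle
  have hδt : δ ≤ minVal v t z :=
    (le_min (hδs.trans (hzw.trans hle)) hδs).trans (min_minVal_le_minVal v hs hst.subset w z)
  exact hst.not_subset fun x hx => (hdisc x hx).2 (hδt.trans (Finset.inf_le hx))

theorem rational_centre_of_larger_cluster_general (hs : s.Nonempty) (hst : s ⊆ t)
    (hw : IsMaxOn (minVal v s) C w) :
    IsMaxOn (minVal v t) C w ∧ minVal v t w ≤ minVal v s w ∧
      ((∃ z ∈ C, ∃ δ : Γ₀, ∀ x ∈ t, x ∈ s ↔ δ ≤ v (x - z)) → s ⊂ t →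
        minVal v t w < minVal v s w) :=
  ⟨isMaxOn_minVal_of_subset v hs hst hw, minVal_anti v hst w, fun ⟨_, hz, _, hdisc⟩ hss =>
    minVal_lt_minVal_of_ssubset v hs hss hdisc (hw hz)⟩

end Valuation

/-- The valuation of a `Setup`, bundled as an additive valuation so that general results on
valuations apply to it. -/
def Setup.addValuation (S : Setup K Kbar) : AddValuation Kbar (WithTop ℚ) :=
  AddValuation.of S.v ((S.v_top_iff 0).2 rfl) S.v_one S.v_add S.v_mul

lemma dminK_eq_minVal (S : Setup K Kbar) (s : Finset Kbar) (w : K) :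
    dminK S s w = minVal S.addValuation s (algebraMap K Kbar w) :=
  rfl

lemma isRationalCentre_iff_isMaxOn {S : Setup K Kbar} {s : Finset Kbar} {w : K} :
    IsRationalCentre S s w ↔
      IsMaxOn (minVal S.addValuation s) (Set.range (algebraMap K Kbar)) (algebraMap K Kbar w) := by
  simp only [IsRationalCentre, dminK_eq_minVal, isMaxOn_iff, Set.forall_mem_range]

lemma IsCluster.subset_rootFinset {S : Setup K Kbar} {f : K[X]} {t : Finset Kbar}
    (ht : IsCluster S f t) : t ⊆ rootFinset f := by
  obtain ⟨-, z, δ, rfl⟩ := ht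
  exact Finset.filter_subset _ _

lemma IsRationalCluster.exists_mem_iff {S : Setup K Kbar} {f : K[X]} {s t : Finset Kbar}
    (hs : IsRationalCluster S f s) (ht : t ⊆ rootFinset f) :
    ∃ z ∈ Set.range (algebraMap K Kbar), ∃ δ : WithTop ℚ,
      ∀ x ∈ t, x ∈ s ↔ δ ≤ S.addValuation (x - z) := by
  obtain ⟨-, z, δ, rfl⟩ := hs
  exact ⟨_, ⟨z, rfl⟩, δ, fun x hx => Finset.mem_filter.trans (and_iff_right (ht hx))⟩

/-- **Rational centres pass to larger clusters.** If `w` is a rational centre of the proper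
cluster `s` and `t ⊇ s` is a cluster, then `w` is a rational centre of `t` and
`ρ_t ≤ ρ_s`; if moreover `s` is a rational cluster and `t ⊋ s`, then `ρ_t < ρ_s`. -/
theorem rational_centre_of_larger_cluster
    (S : Setup K Kbar) (f : K[X]) (hsep : f.Separable) (hdeg : 1 ≤ f.natDegree)
    (s t : Finset Kbar) (hs : IsCluster S f s) (hproper : 1 < s.card)
    (ht : IsCluster S f t) (hst : s ⊆ t)
    (w : K) (hw : IsRationalCentre S s w) :
    IsRationalCentre S t w ∧ dminK S t w ≤ dminK S s w ∧
      (IsRationalCluster S f s → s ⊂ t → dminK S t w < dminK S s w) := by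
  simp only [isRationalCentre_iff_isMaxOn, dminK_eq_minVal] at hw ⊢
  obtain ⟨hmax, hle, hlt⟩ := rational_centre_of_larger_cluster_general S.addValuation hs.1 hst hw
  exact ⟨hmax, hle, fun hrat => hlt (hrat.exists_mem_iff ht.subset_rootFinset)⟩

end ClusterPicture
end

section
/- Let s be a proper rational cluster of f with rational centre w_s, and set s' = R ∩ {x ∈ K̄ : v(x − w_s) > ρ_s} (possibly empty). Then (|s| − |s'|)·ρ_s ∈ ℤ. -/
open Polynomial
open scoped Classical

namespace ClusterPicture

variable {K Kbar : Type*} [Field K] [Field Kbar] [Algebra K Kbar]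

/-!
The line of slope `-γ` supporting the Newton polygon of a polynomial meets it in a face, and under
multiplication of polynomials the faces of a given slope are concatenated (Dumas). The face of
`X - r` is a vertex unless `r` has valuation exactly `γ`, when it is an edge of length one. So the
face of a split polynomial runs from the number of roots of valuation `> γ` to the number of roots
of valuation `≥ γ`. The coefficients at its two ends lie in the base field, and their valuations
differ by `γ` times the length of the face. Applied to `f (X + w_s)` with `γ = ρ_s`, this is the
claim, because `s` is precisely the set of roots at distance `≥ ρ_s` from `w_s`.
-/

section NewtonFace

variable {Γ : Type*} [AddCommGroup Γ] [LinearOrder Γ] [IsOrderedAddMonoid Γ]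

/-- The face of slope `-γ` of the Newton polygon of `p`, i.e. of the lower convex hull of the points
`(i, v (p.coeff i))`: these points lie on or above the line `y = m - i γ`, and `k` and `l` are the
smallest and the largest index of a point on it. The face is a vertex if `k = l`, and an edge
otherwise. -/
structure IsNewtonFace_s8 {L : Type*} [Ring L] (v : AddValuation L (WithTop Γ)) (γ : Γ) (p : L[X])
    (m : Γ) (k l : ℕ) : Prop where
  le_coeff : ∀ i, ((m - i • γ : Γ) : WithTop Γ) ≤ v (p.coeff i)
  lt_coeff : ∀ i, i < k ∨ l < i → ((m - i • γ : Γ) : WithTop Γ) < v (p.coeff i)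
  coeff_left : v (p.coeff k) = ((m - k • γ : Γ) : WithTop Γ)
  coeff_right : v (p.coeff l) = ((m - l • γ : Γ) : WithTop Γ)

namespace IsNewtonFace_s8

section Ring

variable {L : Type*} [Ring L] {v : AddValuation L (WithTop Γ)} {γ m m' : Γ} {p q : L[X]}
  {k l k' l' : ℕ}

lemma C_of_eq {c : L} (hc : v c = m) : IsNewtonFace_s8 v γ (C c) m 0 0 where
  le_coeff i := by cases i <;> simp [hc]
  lt_coeff i hi := by
    have hi : i ≠ 0 := by lia
    simpa [coeff_C, hi] using WithTop.coe_lt_top (m - i • γ)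
  coeff_left := by simp [hc]
  coeff_right := by simp [hc]

lemma le_coeff_mul_coeff (hp : IsNewtonFace_s8 v γ p m k l) (hq : IsNewtonFace_s8 v γ q m' k' l')
    (i j : ℕ) :
    ((m + m' - (i + j) • γ : Γ) : WithTop Γ) ≤ v (p.coeff i * q.coeff j) := by
  rw [add_nsmul, add_sub_add_comm, WithTop.coe_add, v.map_mul]
  exact add_le_add (hp.le_coeff i) (hq.le_coeff j)

lemma lt_coeff_mul_coeff (hp : IsNewtonFace_s8 v γ p m k l) (hq : IsNewtonFace_s8 v γ q m' k' l')
    {i j : ℕ} (hij : (i < k ∨ l < i) ∨ (j < k' ∨ l' < j)) :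
    ((m + m' - (i + j) • γ : Γ) : WithTop Γ) < v (p.coeff i * q.coeff j) := by
  rw [add_nsmul, add_sub_add_comm, WithTop.coe_add, v.map_mul]
  rcases hij with hi | hj
  · exact WithTop.add_lt_add_of_lt_of_le WithTop.coe_ne_top (hp.lt_coeff i hi) (hq.le_coeff j)
  · exact WithTop.add_lt_add_of_le_of_lt WithTop.coe_ne_top (hp.le_coeff i) (hq.lt_coeff j hj)

lemma coeff_mul_eq (hp : IsNewtonFace_s8 v γ p m k l) (hq : IsNewtonFace_s8 v γ q m' k' l') {a b : ℕ}
    (ha : v (p.coeff a) = ((m - a • γ : Γ) : WithTop Γ))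
    (hb : v (q.coeff b) = ((m' - b • γ : Γ) : WithTop Γ))
    (hunique : ∀ i j, i + j = a + b → (i, j) ≠ (a, b) → (i < k ∨ l < i) ∨ (j < k' ∨ l' < j)) :
    v ((p * q).coeff (a + b)) = ((m + m' - (a + b) • γ : Γ) : WithTop Γ) := by
  have hab : v (p.coeff a * q.coeff b) = ((m + m' - (a + b) • γ : Γ) : WithTop Γ) := by
    rw [add_nsmul, add_sub_add_comm, WithTop.coe_add, v.map_mul, ha, hb]
  have hmem : (a, b) ∈ Finset.HasAntidiagonal.antidiagonal (a + b) :=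
    Finset.HasAntidiagonal.mem_antidiagonal.mpr rfl
  rw [coeff_mul, ← Finset.add_sum_erase _ _ hmem, ← hab]
  refine v.map_add_eq_of_lt_left (v.map_lt_sum (hab ▸ WithTop.coe_ne_top) ?_)
  rintro ⟨i, j⟩ hij
  obtain ⟨hne, hij⟩ := Finset.mem_erase.mp hij
  rw [Finset.HasAntidiagonal.mem_antidiagonal] at hij
  rw [hab, ← hij]
  exact hp.lt_coeff_mul_coeff hq (hunique i j hij hne)

lemma mul_s8 (hp : IsNewtonFace_s8 v γ p m k l) (hq : IsNewtonFace_s8 v γ q m' k' l') :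
    IsNewtonFace_s8 v γ (p * q) (m + m') (k + k') (l + l') where
  le_coeff n := by
    rw [coeff_mul]
    refine v.map_le_sum fun x hx => ?_
    rw [← Finset.HasAntidiagonal.mem_antidiagonal.mp hx]
    exact hp.le_coeff_mul_coeff hq x.1 x.2
  lt_coeff n hn := by
    rw [coeff_mul]
    refine v.map_lt_sum WithTop.coe_ne_top fun x hx => ?_
    rw [← Finset.HasAntidiagonal.mem_antidiagonal.mp hx] at hn ⊢
    exact hp.lt_coeff_mul_coeff hq (by lia)
  coeff_left := hp.coeff_mul_eq hq hp.coeff_left hq.coeff_left fun i j hij hne => by grind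
  coeff_right := hp.coeff_mul_eq hq hp.coeff_right hq.coeff_right fun i j hij hne => by grind

lemma X_sub_C_of_lt {r : L} (hr : v r = m) (hm : m < γ) : IsNewtonFace_s8 v γ (X - C r) m 0 0 where
  le_coeff
    | 0 => by simp [hr]
    | 1 => by simpa using WithTop.coe_le_coe.mpr (sub_nonpos.mpr hm.le)
    | i + 2 => by simp [coeff_X]
  lt_coeff
    | 0, hi => by lia
    | 1, _ => by simpa using WithTop.coe_lt_coe.mpr (sub_neg.mpr hm)
    | i + 2, _ => by simpa [coeff_X] using WithTop.coe_lt_top (m - (i + 2) • γ)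
  coeff_left := by simp [hr]
  coeff_right := by simp [hr]

lemma X_sub_C_of_le {r : L} (hr : γ ≤ v r) :
    IsNewtonFace_s8 v γ (X - C r) γ (if γ < v r then 1 else 0) 1 where
  le_coeff
    | 0 => by simpa using hr
    | 1 => by simp
    | i + 2 => by simp [coeff_X]
  lt_coeff
    | 0, hi => by
      have hlt : γ < v r := by grind
      simpa using hlt
    | 1, hi => by grind
    | i + 2, _ => by simpa [coeff_X] using WithTop.coe_lt_top (γ - (i + 2) • γ)
  coeff_left := by
    split_ifs with h
    · simp
    · simpa using le_antisymm (not_lt.mp h) hr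
  coeff_right := by simp

end Ring

variable {L : Type*}

lemma exists_X_sub_C [Ring L] (v : AddValuation L (WithTop Γ)) (γ : Γ) (r : L) :
    ∃ m, IsNewtonFace_s8 v γ (X - C r) m (if γ < v r then 1 else 0) (if γ ≤ v r then 1 else 0) := by
  rcases lt_or_ge (v r) γ with hr | hr
  · rw [if_neg hr.not_gt, if_neg hr.not_ge]
    obtain ⟨q, hq⟩ := WithTop.ne_top_iff_exists.mp hr.ne_top
    exact ⟨q, X_sub_C_of_lt hq.symm (WithTop.coe_lt_coe.mp (hq ▸ hr))⟩
  · rw [if_pos hr]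
    exact ⟨γ, X_sub_C_of_le hr⟩

lemma exists_prod_X_sub_C [CommRing L] (v : AddValuation L (WithTop Γ)) (γ : Γ) (t : Multiset L) :
    ∃ m, IsNewtonFace_s8 v γ (t.map (X - C ·)).prod m
      (t.countP (γ < v ·)) (t.countP (γ ≤ v ·)) := by
  induction t using Multiset.induction_on with
  | empty => exact ⟨0, by simpa using C_of_eq v.map_one⟩
  | cons r t ih =>
    obtain ⟨m, hm⟩ := ih
    obtain ⟨m', hm'⟩ := exists_X_sub_C v γ r
    refine ⟨m + m', ?_⟩
    simpa only [Multiset.map_cons, Multiset.prod_cons, Multiset.countP_cons, mul_comm]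
      using hm.mul_s8 hm'

lemma exists_of_splits [Field L] (v : AddValuation L (WithTop Γ)) (γ : Γ) {p : L[X]} (hp : p ≠ 0)
    (hsplits : p.Splits) :
    ∃ m, IsNewtonFace_s8 v γ p m (p.roots.countP (γ < v ·)) (p.roots.countP (γ ≤ v ·)) := by
  obtain ⟨c, hc⟩ := WithTop.ne_top_iff_exists.mp (v.ne_top_iff.mpr (leadingCoeff_ne_zero.mpr hp))
  obtain ⟨m, hm⟩ := exists_prod_X_sub_C v γ p.roots
  have hface := (C_of_eq hc.symm).mul_s8 hm
  rw [← hsplits.eq_prod_roots, zero_add, zero_add] at hface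
  exact ⟨c + m, hface⟩

end IsNewtonFace_s8

end NewtonFace

theorem size_mul_radius_integral_general {R L Γ : Type*} [CommRing R] [Field L] [Algebra R L]
    [AddCommGroup Γ] [LinearOrder Γ] [IsOrderedAddMonoid Γ]
    (v : AddValuation L (WithTop Γ)) (H : AddSubgroup Γ)
    (hH : ∀ (x : R) (γ : Γ), v (algebraMap R L x) = γ → γ ∈ H)
    (f : R[X]) (hf : f.map (algebraMap R L) ≠ 0) (hsplits : (f.map (algebraMap R L)).Splits)
    (w : R) (ρ : Γ) :
    (((f.aroots L).countP (fun r => ρ ≤ v (r - algebraMap R L w)) : ℤ) -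
      (f.aroots L).countP (fun r => ρ < v (r - algebraMap R L w))) • ρ ∈ H := by
  set g := (taylor w f).map (algebraMap R L)
  have hg_taylor : g = taylor (algebraMap R L w) (f.map (algebraMap R L)) := map_taylor ..
  have hroots : g.roots = (f.aroots L).map (· - algebraMap R L w) := by
    simpa [hg_taylor, taylor_apply] using
      roots_comp_C_mul_X_add_C (f.map (algebraMap R L)) 1 (algebraMap R L w) isUnit_one
  obtain ⟨m, hm⟩ := IsNewtonFace_s8.exists_of_splits v ρ (p := g)
    (by rwa [hg_taylor, Ne, taylor_eq_zero]) (hg_taylor ▸ hsplits.taylor _)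
  have hmem := H.sub_mem (hH _ _ (coeff_map (algebraMap R L) _ ▸ hm.coeff_left))
    (hH _ _ (coeff_map (algebraMap R L) _ ▸ hm.coeff_right))
  rw [sub_sub_sub_cancel_left, hroots, Multiset.countP_map, Multiset.countP_map] at hmem
  simpa only [sub_zsmul, ← sub_eq_add_neg, natCast_zsmul, Multiset.countP_eq_card_filter] using hmem

/-- The valuation of a `Setup` as a Mathlib additive valuation, to which the results on Newton
polygons apply. -/
def Setup.addVal (S : Setup K Kbar) : AddValuation Kbar (WithTop ℚ) :=
  AddValuation.of S.v ((S.v_top_iff 0).mpr rfl) S.v_one S.v_add S.v_mul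

lemma Setup.mem_range_of_v_algebraMap_eq (S : Setup K Kbar) (x : K) (γ : ℚ)
    (hx : S.v (algebraMap K Kbar x) = γ) : γ ∈ (Int.castAddHom ℚ).range := by
  have hx0 : x ≠ 0 := by
    rintro rfl
    rw [map_zero, (S.v_top_iff 0).mpr rfl] at hx
    exact WithTop.top_ne_coe hx
  obtain ⟨n, hn⟩ := S.v_base_int x hx0
  exact ⟨n, WithTop.coe_injective (hn.symm.trans hx)⟩

lemma IsRationalCluster.eq_filter {S : Setup K Kbar} {f : K[X]} {s : Finset Kbar} {w : K} {ρ : ℚ}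
    (hs : IsRationalCluster S f s) (hw : IsRationalCentre S s w) (hρ : dminK S s w = (ρ : ℚ)) :
    s = (rootFinset f).filter fun r => ((ρ : ℚ) : WithTop ℚ) ≤ S.v (r - algebraMap K Kbar w) := by
  obtain ⟨⟨r₀, hr₀⟩, w₀, δ, hsδ⟩ := hs
  have hmem_δ {r : Kbar} : r ∈ s ↔ r ∈ rootFinset f ∧ (δ : ℚ) ≤ S.v (r - algebraMap K Kbar w₀) := by
    rw [hsδ, Finset.mem_filter]
  have hρ_le {r : Kbar} (hr : r ∈ s) : (ρ : ℚ) ≤ S.v (r - algebraMap K Kbar w) :=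
    hρ ▸ Finset.inf_le (f := fun r => S.v (r - algebraMap K Kbar w)) hr
  have hδρ : ((δ : ℚ) : WithTop ℚ) ≤ (ρ : ℚ) :=
    hρ ▸ (Finset.le_inf fun _ hr => (hmem_δ.mp hr).2).trans (hw w₀)
  have hcentres : (δ : ℚ) ≤ S.v (algebraMap K Kbar w - algebraMap K Kbar w₀) := by
    have h := S.addVal.map_le_sub (hmem_δ.mp hr₀).2 (hδρ.trans (hρ_le hr₀))
    rwa [sub_sub_sub_cancel_left] at h
  ext r
  rw [Finset.mem_filter]
  refine ⟨fun hr => ⟨(hmem_δ.mp hr).1, hρ_le hr⟩, fun ⟨hr, hρr⟩ => hmem_δ.mpr ⟨hr, ?_⟩⟩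
  have h := S.addVal.map_le_add (hδρ.trans hρr) hcentres
  rwa [sub_add_sub_cancel] at h

lemma card_filter_rootFinset {f : K[X]} (hf : f.Separable) (P : Kbar → Prop) [DecidablePred P] :
    ((rootFinset f).filter P).card = (f.aroots Kbar).countP P := by
  rw [Multiset.countP_eq_card_filter, Finset.card_def, Finset.filter_val, rootFinset,
    Multiset.toFinset_val, (nodup_roots hf.map).dedup]

/-- **Integrality of `(|s| − |s'|)·ρ_s`.** Let `s` be a proper rational cluster with rational
centre `w_s`, and let `s' = R ∩ {x : v(x − w_s) > ρ_s}`. Then `(|s| − |s'|)·ρ_s ∈ ℤ`. -/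
theorem size_mul_radius_integral
    (S : Setup K Kbar) (f : K[X]) (hsep : f.Separable) (hdeg : 1 ≤ f.natDegree)
    (s : Finset Kbar) (hs : IsRationalCluster S f s) (hproper : 1 < s.card)
    (w : K) (hw : IsRationalCentre S s w)
    (ρ : ℚ) (hρ : dminK S s w = ((ρ : ℚ) : WithTop ℚ))
    (s' : Finset Kbar)
    (hs' : s' = (rootFinset f).filter
      fun r => ((ρ : ℚ) : WithTop ℚ) < S.v (r - algebraMap K Kbar w)) :
    ∃ n : ℤ, ((s.card : ℚ) - (s'.card : ℚ)) * ρ = (n : ℚ) := by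
  have := S.algClosed
  obtain ⟨n, hn⟩ := size_mul_radius_integral_general S.addVal _ S.mem_range_of_v_algebraMap_eq f
    (Polynomial.map_ne_zero hsep.ne_zero) (IsAlgClosed.splits _) w ρ
  rw [hs.eq_filter hw hρ, hs', card_filter_rootFinset hsep, card_filter_rootFinset hsep]
  refine ⟨n, .trans ?_ hn.symm⟩
  rw [zsmul_eq_mul]
  push_cast
  -- Only the decidability instances differ.
  congr!

end ClusterPicture
end
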